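/- arXiv:1903.07019 — 2 statements merged into one kernel-verified Lean document; each statement's English description precedes it below -/
import Mathlib

section
/- Let S be a finite family of at least 2 pairwise disjoint segments in ℝ² that are all parallel (all segments have the same direction) and whose endpoints do not all lie on a single line. Then S admits a circumscribing polygon. -/
noncomputable section

/-- A point of the plane. -/
abbrev Pt : Type := ℝ × ℝ

/-- The closed segment with endpoints `a` and `b`. -/
def Seg (a b : Pt) : Set Pt := segment ℝ a b

/-- The set of endpoints of the segments of a family `S`. -/
def SegEndpoints (S : Finset (Pt × Pt)) : Set Pt :=
  ⋃ s ∈ (S : Set (Pt × Pt)), ({s.1, s.2} : Set Pt)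

/-- `S` is a family of (nondegenerate) pairwise disjoint segments. -/
def DisjointFamily (S : Finset (Pt × Pt)) : Prop :=
  (∀ s ∈ S, s.1 ≠ s.2) ∧
  (S : Set (Pt × Pt)).Pairwise (fun s t => Disjoint (Seg s.1 s.2) (Seg t.1 t.2))

/-- No three endpoints of segments of `S` are collinear. -/
def GeneralPosition (S : Finset (Pt × Pt)) : Prop :=
  ∀ p ∈ SegEndpoints S, ∀ q ∈ SegEndpoints S, ∀ r ∈ SegEndpoints S,
    p ≠ q → p ≠ r → q ≠ r → ¬ Collinear ℝ ({p, q, r} : Set Pt)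

/-- A simple polygon: a cyclic sequence of `k ≥ 3` pairwise distinct vertices such that
two edges intersect iff they are consecutive, and consecutive edges meet exactly in
their common endpoint. -/
structure SimplePolygon : Type where
  k : ℕ
  three_le : 3 ≤ k
  vtx : ZMod k → Pt
  inj : Function.Injective vtx
  edge_inter : ∀ i j : ZMod k, i ≠ j →
    ((Seg (vtx i) (vtx (i + 1)) ∩ Seg (vtx j) (vtx (j + 1))).Nonempty ↔
      (j = i + 1 ∨ i = j + 1))
  edge_consec : ∀ i : ZMod k,
    Seg (vtx i) (vtx (i + 1)) ∩ Seg (vtx (i + 1)) (vtx (i + 2)) = {vtx (i + 1)}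

/-- The union of the edges of a simple polygon. -/
def SimplePolygon.edgeUnion (P : SimplePolygon) : Set Pt :=
  ⋃ i : ZMod P.k, Seg (P.vtx i) (P.vtx (i + 1))

/-- The closed region of a simple polygon: the union of its edges together with all
bounded connected components of the complement of the union of the edges. -/
def SimplePolygon.closedRegion (P : SimplePolygon) : Set Pt :=
  P.edgeUnion ∪
    {x | x ∉ P.edgeUnion ∧ Bornology.IsBounded (connectedComponentIn (P.edgeUnion)ᶜ x)}

/-- `P` is a circumscribing polygon for `S`: its vertex set is exactly the set of
endpoints of segments of `S`, and every segment of `S` lies in the closed region of `P`. -/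
def IsCircumscribing (S : Finset (Pt × Pt)) (P : SimplePolygon) : Prop :=
  Set.range P.vtx = SegEndpoints S ∧ ∀ s ∈ S, Seg s.1 s.2 ⊆ P.closedRegion

/-!
Let `v` be the common direction. Linear coordinates make `v` horizontal, and a further shear along
`v` makes every point of a lower row lie to the left of every point of a higher row. The endpoints
then form the graph of a monotone function, and each row contains at least two of them.

Let the upper chain pass through the leftmost point of every row and the whole top row, and let the
lower chain pass through all remaining points together with the two extreme points. The upper chain
climbs to the next row as soon as it can, the lower chain as late as it can, so the lower one runs
strictly below the upper one between their common ends. Together the chains bound a simple polygon,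
and the monotonicity of both chains keeps every row between them.
-/

section Enumeration

lemma exists_mem_Ioc_succ {α : Type*} [LinearOrder α] {u : ℕ → α} (hu : Monotone u) {r : ℕ} {x : α}
    (hx : x ∈ Set.Ioc (u 0) (u r)) : ∃ i < r, x ∈ Set.Ioc (u i) (u (i + 1)) := by
  rw [← hu.biUnion_Ico_Ioc_map_succ 0 r] at hx
  simpa [and_left_comm] using hx

lemma exists_gap {α : Type*} [LinearOrder α] {u : ℕ → α} (hu : StrictMono u) {r : ℕ} {x : α}
    (hx : x ∈ Set.Ioo (u 0) (u r)) (hxU : x ∉ u '' Set.Iic r) :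
    ∃ i < r, x ∈ Set.Ioo (u i) (u (i + 1)) ∧
      ∀ c ∈ u '' Set.Iic r, c ≤ u i ∨ u (i + 1) ≤ c := by
  obtain ⟨i, hi, hxi⟩ := exists_mem_Ioc_succ hu.monotone (Set.Ioo_subset_Ioc_self hx)
  refine ⟨i, hi, ⟨hxi.1, hxi.2.lt_of_ne fun he => hxU ⟨i + 1, hi, he.symm⟩⟩, ?_⟩
  rintro _ ⟨j, -, rfl⟩
  exact (le_or_gt j i).imp (hu.monotone ·) (hu.monotone ·)

lemma exists_common_cell {α : Type*} [LinearOrder α] {l u : ℕ → α} (hl : Monotone l)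
    (hu : Monotone u) {r s : ℕ} {x : α} (hxl : x ∈ Set.Ioc (l 0) (l r))
    (hxu : x ∈ Set.Ioc (u 0) (u s)) :
    ∃ i < r, ∃ j < s, ∃ a ∈ Set.range l ∪ Set.range u, ∃ b ∈ Set.range l ∪ Set.range u,
      a ∈ Set.Icc (l i) (l (i + 1)) ∩ Set.Icc (u j) (u (j + 1)) ∧
      b ∈ Set.Icc (l i) (l (i + 1)) ∩ Set.Icc (u j) (u (j + 1)) ∧ x ∈ Set.Ioc a b := by
  obtain ⟨i, hi, hxi⟩ := exists_mem_Ioc_succ hl hxl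
  obtain ⟨j, hj, hxj⟩ := exists_mem_Ioc_succ hu hxu
  have hax : max (l i) (u j) < x := max_lt hxi.1 hxj.1
  have hxb : x ≤ min (l (i + 1)) (u (j + 1)) := le_min hxi.2 hxj.2
  have hab := (hax.trans_le hxb).le
  refine ⟨i, hi, j, hj, max (l i) (u j), ?_, min (l (i + 1)) (u (j + 1)), ?_, ?_, ?_, hax, hxb⟩
  · rcases max_choice (l i) (u j) with h | h <;> simp [h]
  · rcases min_choice (l (i + 1)) (u (j + 1)) with h | h <;> simp [h]
  · rw [Set.Icc_inter_Icc]
    exact Set.left_mem_Icc.2 hab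
  · rw [Set.Icc_inter_Icc]
    exact Set.right_mem_Icc.2 hab

lemma exists_strictMono_image_Iio_card (U : Finset ℝ) :
    ∃ u : ℕ → ℝ, StrictMono u ∧ u '' Set.Iio U.card = U := by
  induction U using Finset.induction_on_max with
  | empty => exact ⟨Nat.cast, Nat.strictMono_cast, by simp⟩
  | insert a U ha ih =>
    obtain ⟨u, hu, hU⟩ := ih
    have hlt {n : ℕ} (hn : n < U.card) : u n < a :=
      ha _ (Finset.mem_coe.1 (hU ▸ Set.mem_image_of_mem u hn))
    have haU : a ∉ U := fun haU => (ha a haU).false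
    have hshift : StrictMono fun n : ℕ => a + ((n : ℝ) - U.card) := fun _ _ hij => by
      simpa using hij
    refine ⟨_, hu.ite' hshift (p := (· < U.card)) (fun _ _ => lt_trans) ?_, ?_⟩
    · intro i j hi hj _
      have : (U.card : ℝ) ≤ j := by exact_mod_cast not_lt.1 hj
      linarith [hlt hi]
    · have himage : (fun n => if n < U.card then u n else a + ((n : ℝ) - U.card)) ''
          Set.Iio U.card = U := by
        rw [← hU]
        exact Set.image_congr fun n hn => if_pos hn
      rw [Finset.card_insert_of_notMem haU, ← Order.succ_eq_add_one, Order.Iio_succ_eq_insert,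
        Set.image_insert_eq, himage, Finset.coe_insert]
      simp

lemma exists_strictMono_image_Iic {U : Set ℝ} (hU : U.Finite) {m M : ℝ} (hm : IsLeast U m)
    (hM : IsGreatest U M) :
    ∃ (u : ℕ → ℝ) (r : ℕ), StrictMono u ∧ u '' Set.Iic r = U ∧ u 0 = m ∧ u r = M := by
  obtain ⟨u, hu, himage⟩ := exists_strictMono_image_Iio_card hU.toFinset
  rw [hU.coe_toFinset] at himage
  have hcard : hU.toFinset.card ≠ 0 :=
    Finset.card_ne_zero_of_mem (hU.mem_toFinset.2 hm.1)
  obtain ⟨r, hr⟩ := Nat.exists_eq_succ_of_ne_zero hcard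
  have hIic : Set.Iio hU.toFinset.card = Set.Iic r := by
    ext n; rw [hr, Set.mem_Iio, Set.mem_Iic, Nat.lt_succ_iff]
  rw [hIic] at himage
  refine ⟨u, r, hu, himage, ?_, ?_⟩
  · refine IsLeast.unique (himage ▸ hu.monotone.map_isLeast ?_) hm
    exact ⟨Set.mem_Iic.2 r.zero_le, fun n _ => n.zero_le⟩
  · exact IsGreatest.unique (himage ▸ hu.monotone.map_isGreatest isGreatest_Iic) hM

end Enumeration

/-- The piecewise linear interpolation of `y` at the nodes `u 0 ≤ ⋯ ≤ u r`, extended constantly to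
the left of `u 0` and by the last linear piece to the right of `u r`. -/
def interp (u : ℕ → ℝ) (y : ℝ → ℝ) : ℕ → ℝ → ℝ
  | 0, _ => y (u 0)
  | r + 1, x => interp u y r (min x (u r)) + slope y (u r) (u (r + 1)) * (max x (u r) - u r)

section Interpolation

variable {u : ℕ → ℝ} {y : ℝ → ℝ} {r i : ℕ}

lemma continuous_interp (u : ℕ → ℝ) (y : ℝ → ℝ) (r : ℕ) : Continuous (interp u y r) := by
  induction r with
  | zero => exact continuous_const
  | succ r ih => simp only [interp]; fun_prop

lemma monotone_interp (hy : MonotoneOn y (u '' Set.Iic r)) :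
    Monotone (interp u y r) := by
  induction r with
  | zero => exact monotone_const
  | succ r ih =>
    have hslope : 0 ≤ slope y (u r) (u (r + 1)) :=
      hy.slope_nonneg ⟨r, by simp, rfl⟩ ⟨r + 1, by simp, rfl⟩
    have hmono := ih (hy.mono (Set.image_mono (Set.Iic_subset_Iic.2 r.le_succ)))
    intro a b hab
    simp only [interp]
    gcongr
    exact hmono (min_le_min_right _ hab)

lemma interp_node (hu : Monotone u) (hi : i ≤ r) : interp u y r (u i) = y (u i) := by
  induction r generalizing i with
  | zero => rw [Nat.le_zero.1 hi, interp]
  | succ r ih =>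
    rcases hi.lt_or_eq with h | rfl
    · have hir := Nat.lt_succ_iff.1 h
      simp [interp, hu hir, ih hir]
    · have := sub_smul_slope y (u r) (u (r + 1))
      rw [smul_eq_mul, vsub_eq_sub] at this
      simp only [interp, min_eq_right (hu r.le_succ), max_eq_left (hu r.le_succ), ih le_rfl]
      linarith

lemma interp_of_mem_Icc (hu : Monotone u) (hi : i < r) {x : ℝ}
    (hx : x ∈ Set.Icc (u i) (u (i + 1))) :
    interp u y r x = y (u i) + slope y (u i) (u (i + 1)) * (x - u i) := by
  induction r with
  | zero => omega
  | succ r ih =>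
    rcases Nat.lt_succ_iff_lt_or_eq.1 hi with h | rfl
    · have hxr : x ≤ u r := hx.2.trans (hu h)
      simp [interp, hxr, ih h]
    · simp [interp, hx.1, interp_node hu le_rfl]

lemma interp_convexComb (hu : Monotone u) (hi : i < r) {a b p q : ℝ}
    (ha : a ∈ Set.Icc (u i) (u (i + 1))) (hb : b ∈ Set.Icc (u i) (u (i + 1)))
    (hp : 0 ≤ p) (hq : 0 ≤ q) (hpq : p + q = 1) :
    interp u y r (p * a + q * b) = p * interp u y r a + q * interp u y r b := by
  have hab : p * a + q * b ∈ Set.Icc (u i) (u (i + 1)) := convex_Icc _ _ ha hb hp hq hpq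
  rw [interp_of_mem_Icc hu hi ha, interp_of_mem_Icc hu hi hb, interp_of_mem_Icc hu hi hab]
  linear_combination (slope y (u i) (u (i + 1)) * u i - y (u i)) * hpq

/-- The point over `x` of the graph of `y`, the form in which all vertices occur. -/
def graphPt (y : ℝ → ℝ) (x : ℝ) : Pt := (x, y x)

lemma mem_seg_graphPt_iff (hu : Monotone u) (hi : i < r) {z : Pt} :
    z ∈ Seg (graphPt y (u i)) (graphPt y (u (i + 1))) ↔
      z.1 ∈ Set.Icc (u i) (u (i + 1)) ∧ z.2 = interp u y r z.1 := by
  have hle := hu i.le_succ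
  have key {p q : ℝ} (hp : 0 ≤ p) (hq : 0 ≤ q) (hpq : p + q = 1) :
      interp u y r (p * u i + q * u (i + 1)) = p * y (u i) + q * y (u (i + 1)) := by
    rw [interp_convexComb hu hi (Set.left_mem_Icc.2 hle) (Set.right_mem_Icc.2 hle) hp hq hpq,
      interp_node hu hi.le, interp_node hu hi]
  constructor
  · rintro ⟨p, q, hp, hq, hpq, rfl⟩
    exact ⟨segment_eq_Icc hle ▸ ⟨p, q, hp, hq, hpq, rfl⟩, (key hp hq hpq).symm⟩
  · rintro ⟨hx, hz⟩
    obtain ⟨p, q, hp, hq, hpq, hx⟩ := segment_eq_Icc hle ▸ hx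
    refine ⟨p, q, hp, hq, hpq, Prod.ext hx ?_⟩
    rw [hz, ← hx]
    exact (key hp hq hpq).symm

lemma exists_seg_graphPt_iff (hu : Monotone u) (hr : u 0 < u r) {z : Pt} :
    (∃ i < r, z ∈ Seg (graphPt y (u i)) (graphPt y (u (i + 1)))) ↔
      z.1 ∈ Set.Icc (u 0) (u r) ∧ z.2 = interp u y r z.1 := by
  constructor
  · rintro ⟨i, hi, hz⟩
    rw [mem_seg_graphPt_iff hu hi] at hz
    exact ⟨⟨(hu i.zero_le).trans hz.1.1, hz.1.2.trans (hu hi)⟩, hz.2⟩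
  · rintro ⟨hx, hz⟩
    rcases hx.1.eq_or_lt with h0 | h0
    · have h0r : 0 < r := Nat.pos_of_ne_zero (by rintro rfl; exact hr.false)
      exact ⟨0, h0r, (mem_seg_graphPt_iff hu h0r).2 ⟨⟨hx.1, h0 ▸ hu (Nat.le_succ 0)⟩, hz⟩⟩
    · obtain ⟨i, hi, hxi⟩ := exists_mem_Ioc_succ hu ⟨h0, hx.2⟩
      exact ⟨i, hi, (mem_seg_graphPt_iff hu hi).2 ⟨Set.Ioc_subset_Icc_self hxi, hz⟩⟩

lemma interp_mem_openSegment (hu : Monotone u) (hi : i < r) {x : ℝ}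
    (hx : x ∈ Set.Ioo (u i) (u (i + 1))) :
    interp u y r x ∈ openSegment ℝ (y (u i)) (y (u (i + 1))) := by
  have hle := hu i.le_succ
  obtain ⟨p, q, hp, hq, hpq, rfl⟩ := openSegment_eq_Ioo (hx.1.trans hx.2) ▸ hx
  refine ⟨p, q, hp, hq, hpq, ?_⟩
  simp only [smul_eq_mul]
  rw [interp_convexComb hu hi (Set.left_mem_Icc.2 hle) (Set.right_mem_Icc.2 hle) hp.le hq.le hpq,
    interp_node hu hi.le, interp_node hu hi]

lemma interp_lt_interp_of_cell {l : ℕ → ℝ} {s j : ℕ} (hl : Monotone l) (hu : Monotone u)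
    (hi : i < r) (hj : j < s) {a b x : ℝ}
    (ha : a ∈ Set.Icc (l i) (l (i + 1)) ∩ Set.Icc (u j) (u (j + 1)))
    (hb : b ∈ Set.Icc (l i) (l (i + 1)) ∩ Set.Icc (u j) (u (j + 1)))
    (ha_le : interp l y r a ≤ interp u y s a) (hb_le : interp l y r b ≤ interp u y s b)
    (hlt : interp l y r a < interp u y s a ∨ interp l y r b < interp u y s b)
    (hx : x ∈ Set.Ioo a b) : interp l y r x < interp u y s x := by
  obtain ⟨p, q, hp, hq, hpq, rfl⟩ := openSegment_eq_Ioo (hx.1.trans hx.2) ▸ hx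
  rw [smul_eq_mul, smul_eq_mul, interp_convexComb hl hi ha.1 hb.1 hp.le hq.le hpq,
    interp_convexComb hu hj ha.2 hb.2 hp.le hq.le hpq]
  rcases hlt with h | h
  · exact add_lt_add_of_lt_of_le (mul_lt_mul_of_pos_left h hp)
      (mul_le_mul_of_nonneg_left hb_le hq.le)
  · exact add_lt_add_of_le_of_lt (mul_le_mul_of_nonneg_left ha_le hp.le)
      (mul_lt_mul_of_pos_left h hq)

/-- Both interpolations are affine between consecutive elements of the union of the two node sets,
so it is enough to compare them at the nodes. -/
lemma interp_lt_interp {l : ℕ → ℝ} {s : ℕ} (hl : StrictMono l) (hu : StrictMono u)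
    (h0 : l 0 = u 0) (h1 : l r = u s) (hrs : 3 ≤ r + s)
    (hnode : ∀ c ∈ Set.range l ∪ Set.range u, c ∈ Set.Ioo (l 0) (l r) →
      interp l y r c < interp u y s c) {x : ℝ} (hx : x ∈ Set.Ioo (l 0) (l r)) :
    interp l y r x < interp u y s x := by
  have hnode_le {c : ℝ} (hc : c ∈ Set.range l ∪ Set.range u) (hc0 : l 0 ≤ c) (hcr : c ≤ l r) :
      interp l y r c ≤ interp u y s c := by
    rcases hc0.eq_or_lt with rfl | hc0
    · rw [interp_node hl.monotone r.zero_le, h0, interp_node hu.monotone s.zero_le]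
    rcases hcr.eq_or_lt with rfl | hcr
    · rw [interp_node hl.monotone le_rfl, h1, interp_node hu.monotone le_rfl]
    · exact (hnode c hc ⟨hc0, hcr⟩).le
  obtain ⟨i, hi, j, hj, a, ha, b, hb, hac, hbc, hax, hxb⟩ :=
    exists_common_cell (s := s) hl.monotone hu.monotone ⟨hx.1, hx.2.le⟩
      ⟨h0 ▸ hx.1, h1 ▸ hx.2.le⟩
  rcases hxb.eq_or_lt with rfl | hxb
  · exact hnode x hb hx
  have hl0a : l 0 ≤ a := (hl.monotone i.zero_le).trans hac.1.1
  have hblr : b ≤ l r := hbc.1.2.trans (hl.monotone hi)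
  have hinner : l 0 < a ∨ b < l r := by
    by_contra! h
    have hi0 : i ≤ 0 := hl.le_iff_le.1 (hac.1.1.trans h.1)
    have hj0 : j ≤ 0 := hu.le_iff_le.1 (hac.2.1.trans (h.1.trans_eq h0))
    have hri : r ≤ i + 1 := hl.le_iff_le.1 (h.2.trans hbc.1.2)
    have hsj : s ≤ j + 1 := hu.le_iff_le.1 (h1.symm.trans_le (h.2.trans hbc.2.2))
    omega
  exact interp_lt_interp_of_cell hl.monotone hu.monotone hi hj hac hbc
    (hnode_le ha hl0a (hax.trans hx.2).le) (hnode_le hb (hx.1.trans hxb).le hblr)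
    (hinner.imp (fun h => hnode a ha ⟨h, hax.trans hx.2⟩)
      fun h => hnode b hb ⟨hx.1.trans hxb, h⟩) ⟨hax, hxb⟩

end Interpolation

section ClosedPath

/-- A closed polygonal path `p 0, …, p k = p 0` whose edges meet only as those of a simple polygon
may. Indexing by `ℕ` keeps the arithmetic of `ZMod k` out of concrete constructions. -/
structure IsSimpleClosedPath (k : ℕ) (p : ℕ → Pt) : Prop where
  three_le : 3 ≤ k
  closed : p k = p 0
  ne_succ : ∀ i < k, p i ≠ p (i + 1)
  edge_inter : ∀ i j : ℕ, ∀ z : Pt, i < j → j < k →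
    z ∈ Seg (p i) (p (i + 1)) → z ∈ Seg (p j) (p (j + 1)) →
      j = i + 1 ∧ z = p j ∨ i = 0 ∧ j + 1 = k ∧ z = p 0

namespace IsSimpleClosedPath

variable {k : ℕ} {p : ℕ → Pt}

lemma neZero (h : IsSimpleClosedPath k p) : NeZero k :=
  ⟨by have := h.three_le; omega⟩

lemma val_succ (h : IsSimpleClosedPath k p) (i : ZMod k) :
    i.val + 1 < k ∧ (i + 1).val = i.val + 1 ∨ i.val + 1 = k ∧ (i + 1).val = 0 := by
  have := h.neZero
  have hk := h.three_le
  have : Fact (1 < k) := ⟨by omega⟩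
  rw [ZMod.val_add, ZMod.val_one]
  rcases (Nat.succ_le_of_lt (ZMod.val_lt i)).lt_or_eq with hi | hi
  · exact Or.inl ⟨hi, Nat.mod_eq_of_lt hi⟩
  · exact Or.inr ⟨hi, by rw [← Nat.succ_eq_add_one, hi, Nat.mod_self]⟩

lemma apply_val_succ (h : IsSimpleClosedPath k p) (i : ZMod k) :
    p (i + 1).val = p (i.val + 1) := by
  rcases h.val_succ i with hi | hi
  · rw [hi.2]
  · rw [hi.2, hi.1, h.closed]

lemma injective_val (h : IsSimpleClosedPath k p) :
    Function.Injective fun i : ZMod k => p i.val := by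
  have := h.neZero
  have hne {i j : ℕ} (hij : i < j) (hj : j < k) : p i ≠ p j := by
    intro he
    rcases h.edge_inter i j (p i) hij hj (left_mem_segment ..) (he ▸ left_mem_segment ..) with
      ⟨rfl, -⟩ | ⟨rfl, rfl, -⟩
    · exact h.ne_succ i (by omega) he
    · exact h.ne_succ j hj (he.symm.trans h.closed.symm)
  intro i j hij
  by_contra hne'
  rcases ((ZMod.val_injective k).ne hne').lt_or_gt with hlt | hlt
  · exact hne hlt (ZMod.val_lt j) hij
  · exact hne hlt (ZMod.val_lt i) hij.symm

lemma edge_inter_val (h : IsSimpleClosedPath k p) {i j : ZMod k} (hij : i ≠ j) {z : Pt}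
    (hi : z ∈ Seg (p i.val) (p (i + 1).val)) (hj : z ∈ Seg (p j.val) (p (j + 1).val)) :
    j = i + 1 ∧ z = p j.val ∨ i = j + 1 ∧ z = p i.val := by
  have := h.neZero
  wlog hlt : i.val < j.val generalizing i j
  · exact (this hij.symm hj hi (((ZMod.val_injective k).ne hij).lt_or_gt.resolve_left hlt)).symm
  rw [h.apply_val_succ] at hi hj
  rcases h.edge_inter _ _ z hlt (ZMod.val_lt j) hi hj with ⟨hs, hz⟩ | ⟨h0, hk, hz⟩
  · refine Or.inl ⟨ZMod.val_injective k ?_, hz⟩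
    have := ZMod.val_lt j
    rcases h.val_succ i with h' | h' <;> omega
  · refine Or.inr ⟨ZMod.val_injective k ?_, h0 ▸ hz⟩
    rcases h.val_succ j with h' | h' <;> omega

/-- The simple polygon traversed by a simple closed path. -/
def polygon (h : IsSimpleClosedPath k p) : SimplePolygon where
  k := k
  three_le := h.three_le
  vtx i := p i.val
  inj := h.injective_val
  edge_inter i j hij := by
    constructor
    · rintro ⟨z, hi, hj⟩
      exact (h.edge_inter_val hij hi hj).imp And.left And.left
    · rintro (rfl | rfl)
      · exact ⟨_, right_mem_segment .., left_mem_segment ..⟩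
      · exact ⟨_, left_mem_segment .., right_mem_segment ..⟩
  edge_consec i := by
    have hk := h.three_le
    have : Fact (1 < k) := ⟨by omega⟩
    have : Fact (2 < k) := ⟨by omega⟩
    have htwo : (2 : ZMod k) = 1 + 1 := one_add_one_eq_two.symm
    refine Set.Subset.antisymm ?_ (Set.singleton_subset_iff.2
      ⟨right_mem_segment .., left_mem_segment ..⟩)
    rintro z ⟨hi, hj⟩
    rw [htwo, ← add_assoc] at hj
    rcases h.edge_inter_val (by simp) hi hj with ⟨-, hz⟩ | ⟨hi', -⟩
    · exact hz
    · have : (2 : ZMod k) = 0 := by linear_combination -hi'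
      have : k ∣ 2 := (ZMod.natCast_eq_zero_iff 2 k).1 (mod_cast this)
      exact absurd (Nat.le_of_dvd two_pos this) (by omega)

lemma range_vtx_polygon (h : IsSimpleClosedPath k p) :
    Set.range h.polygon.vtx = p '' Set.Iio k := by
  have := h.neZero
  change Set.range (fun i : ZMod k => p i.val) = _
  ext z
  constructor
  · rintro ⟨i, rfl⟩
    exact ⟨i.val, ZMod.val_lt i, rfl⟩
  · rintro ⟨n, hn, rfl⟩
    exact ⟨n, congrArg p (ZMod.val_cast_of_lt hn)⟩

lemma mem_edgeUnion_polygon (h : IsSimpleClosedPath k p) {z : Pt} :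
    z ∈ h.polygon.edgeUnion ↔ ∃ n < k, z ∈ Seg (p n) (p (n + 1)) := by
  have := h.neZero
  change z ∈ ⋃ i : ZMod k, Seg (p i.val) (p (i + 1).val) ↔ _
  simp only [Set.mem_iUnion, h.apply_val_succ]
  constructor
  · rintro ⟨i, hi⟩
    exact ⟨i.val, ZMod.val_lt i, hi⟩
  · rintro ⟨n, hn, hz⟩
    exact ⟨n, by rwa [ZMod.val_cast_of_lt hn]⟩

end IsSimpleClosedPath

end ClosedPath

section Map

lemma image_seg (e : Pt ≃L[ℝ] Pt) (a b : Pt) : e '' Seg a b = Seg (e a) (e b) :=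
  image_segment ℝ e.toLinearEquiv.toLinearMap.toAffineMap a b

namespace SimplePolygon

/-- The image of a simple polygon under a linear automorphism of the plane. -/
def map (P : SimplePolygon) (e : Pt ≃L[ℝ] Pt) : SimplePolygon where
  k := P.k
  three_le := P.three_le
  vtx i := e (P.vtx i)
  inj := e.injective.comp P.inj
  edge_inter i j hij := by
    simp only [← image_seg, ← Set.image_inter e.injective, Set.image_nonempty, P.edge_inter i j hij]
  edge_consec i := by
    simp only [← image_seg, ← Set.image_inter e.injective, P.edge_consec, Set.image_singleton]

lemma range_vtx_map (P : SimplePolygon) (e : Pt ≃L[ℝ] Pt) :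
    Set.range (P.map e).vtx = e '' Set.range P.vtx :=
  Set.range_comp e P.vtx

lemma edgeUnion_map (P : SimplePolygon) (e : Pt ≃L[ℝ] Pt) :
    (P.map e).edgeUnion = e '' P.edgeUnion := by
  change ⋃ i, Seg (e (P.vtx i)) (e (P.vtx (i + 1))) = _
  simp only [edgeUnion, Set.image_iUnion, image_seg]

lemma image_closedRegion_subset (P : SimplePolygon) (e : Pt ≃L[ℝ] Pt) :
    e '' P.closedRegion ⊆ (P.map e).closedRegion := by
  rintro _ ⟨x, hx | ⟨hx, hbdd⟩, rfl⟩
  · exact Or.inl (P.edgeUnion_map e ▸ Set.mem_image_of_mem e hx)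
  · have himage := e.toHomeomorph.image_connectedComponentIn (Set.mem_compl hx)
    refine Or.inr ⟨by rwa [edgeUnion_map, e.injective.mem_set_image], ?_⟩
    rw [edgeUnion_map, ← Set.image_compl_eq e.bijective]
    exact himage ▸ e.lipschitz.isBounded_image hbdd

end SimplePolygon

end Map

lemma isBounded_connectedComponentIn_between {f g : ℝ → ℝ} (hf : Continuous f) (hg : Continuous g)
    {a b : ℝ} (hfa : f a = g a) (hfb : f b = g b) {E : Set Pt}
    (hE : ∀ p, p ∈ E ↔ p.1 ∈ Set.Icc a b ∧ (p.2 = f p.1 ∨ p.2 = g p.1)) {z : Pt}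
    (hz : z.1 ∈ Set.Icc a b) (hfz : f z.1 ≤ z.2) (hzg : z.2 ≤ g z.1) (hzE : z ∉ E) :
    Bornology.IsBounded (connectedComponentIn Eᶜ z) := by
  let K : Set Pt := {p | p.1 ∈ Set.Icc a b ∧ f p.1 ≤ p.2 ∧ p.2 ≤ g p.1}
  let O : Set Pt := {p | p.1 ∈ Set.Ioo a b ∧ f p.1 < p.2 ∧ p.2 < g p.1}
  have hO_open : IsOpen O :=
    (isOpen_Ioo.preimage continuous_fst).inter
      ((isOpen_lt (hf.comp continuous_fst) continuous_snd).inter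
        (isOpen_lt continuous_snd (hg.comp continuous_fst)))
  have hK_closed : IsClosed K :=
    (isClosed_Icc.preimage continuous_fst).inter
      ((isClosed_le (hf.comp continuous_fst) continuous_snd).inter
        (isClosed_le continuous_snd (hg.comp continuous_fst)))
  have hOK : O ⊆ K := fun p ⟨hp, hpf, hpg⟩ => ⟨Set.Ioo_subset_Icc_self hp, hpf.le, hpg.le⟩
  have hKO {p : Pt} (hp : p ∈ K) (hpE : p ∉ E) : p ∈ O := by
    obtain ⟨hx, hpf, hpg⟩ := hp
    have hnot : ¬ (p.2 = f p.1 ∨ p.2 = g p.1) := fun h => hpE ((hE p).2 ⟨hx, h⟩)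
    push Not at hnot
    have hlt := hpf.lt_of_ne' hnot.1
    have hlt' := hpg.lt_of_ne hnot.2
    refine ⟨⟨hx.1.lt_of_ne' ?_, hx.2.lt_of_ne ?_⟩, hlt, hlt'⟩ <;> intro h <;> rw [h] at hlt hlt'
    · exact (hlt.trans hlt').ne hfa
    · exact (hlt.trans hlt').ne hfb
  have hCO : connectedComponentIn Eᶜ z ⊆ O :=
    isPreconnected_connectedComponentIn.subset_of_closure_inter_subset hO_open
      ⟨z, mem_connectedComponentIn hzE, hKO ⟨hz, hfz, hzg⟩ hzE⟩
      fun p hp => hKO (closure_minimal hOK hK_closed hp.1) (connectedComponentIn_subset _ _ hp.2)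
  obtain ⟨c, hc⟩ := isCompact_Icc.bddBelow_image (hf.continuousOn (s := Set.Icc a b))
  obtain ⟨d, hd⟩ := isCompact_Icc.bddAbove_image (hg.continuousOn (s := Set.Icc a b))
  refine ((Metric.isBounded_Icc a b).prod (Metric.isBounded_Icc c d)).subset
    fun p hp => ⟨(hOK (hCO hp)).1, ?_, ?_⟩
  · exact (hc ⟨p.1, (hOK (hCO hp)).1, rfl⟩).trans (hOK (hCO hp)).2.1
  · exact (hOK (hCO hp)).2.2.trans (hd ⟨p.1, (hOK (hCO hp)).1, rfl⟩)

section Chains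

/-- Two chains of points of the graph of `y`, over the nodes `l 0 < ⋯ < l r` and `u 0 < ⋯ < u s`,
that share their ends while the first runs strictly below the second in between. -/
structure IsChainPair (y : ℝ → ℝ) (l : ℕ → ℝ) (r : ℕ) (u : ℕ → ℝ) (s : ℕ) : Prop where
  strictMono_lower : StrictMono l
  strictMono_upper : StrictMono u
  left_eq : l 0 = u 0
  right_eq : l r = u s
  three_le : 3 ≤ r + s
  interp_lt : ∀ x ∈ Set.Ioo (l 0) (l r), interp l y r x < interp u y s x

/-- The closed path that runs forward along the lower chain and back along the upper one. -/
def chainLoop (y : ℝ → ℝ) (l : ℕ → ℝ) (r : ℕ) (u : ℕ → ℝ) (s : ℕ) (n : ℕ) : Pt :=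
  graphPt y (if n ≤ r then l n else u (r + s - n))

namespace IsChainPair

variable {y : ℝ → ℝ} {l u : ℕ → ℝ} {r s n m i j : ℕ} {z : Pt}

lemma left_lt_right (h : IsChainPair y l r u s) : l 0 < l r := by
  refine (h.strictMono_lower.monotone r.zero_le).lt_of_ne fun he => ?_
  have hr := h.strictMono_lower.injective he
  have hs := h.strictMono_upper.injective (h.left_eq.symm.trans (he.trans h.right_eq))
  have := h.three_le
  omega

lemma upper_length_pos (h : IsChainPair y l r u s) : 0 < s := by
  refine h.strictMono_upper.lt_iff_lt.1 ?_
  rw [← h.left_eq, ← h.right_eq]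
  exact h.left_lt_right

lemma chainLoop_lower (hn : n ≤ r) : chainLoop y l r u s n = graphPt y (l n) := by
  rw [chainLoop, if_pos hn]

lemma chainLoop_upper (h : IsChainPair y l r u s) (hnm : n + m = r + s) (hm : m ≤ s) :
    chainLoop y l r u s n = graphPt y (u m) := by
  obtain rfl | hn := (show r ≤ n by omega).eq_or_lt
  · rw [chainLoop_lower le_rfl, h.right_eq, show s = m by omega]
  · rw [chainLoop, if_neg hn.not_ge, show r + s - n = m by omega]

lemma mem_edge_lower_iff (h : IsChainPair y l r u s) (hn : n < r) :
    z ∈ Seg (chainLoop y l r u s n) (chainLoop y l r u s (n + 1)) ↔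
      z.1 ∈ Set.Icc (l n) (l (n + 1)) ∧ z.2 = interp l y r z.1 := by
  rw [chainLoop_lower hn.le, chainLoop_lower hn,
    mem_seg_graphPt_iff h.strictMono_lower.monotone hn]

lemma mem_edge_upper_iff (h : IsChainPair y l r u s) (hnm : n + m + 1 = r + s) (hm : m < s) :
    z ∈ Seg (chainLoop y l r u s n) (chainLoop y l r u s (n + 1)) ↔
      z.1 ∈ Set.Icc (u m) (u (m + 1)) ∧ z.2 = interp u y s z.1 := by
  rw [h.chainLoop_upper (m := m + 1) (by omega) hm, h.chainLoop_upper (m := m) (by omega) hm.le,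
    Seg, segment_symm, ← Seg, mem_seg_graphPt_iff h.strictMono_upper.monotone hm]

lemma chainLoop_ne_succ (h : IsChainPair y l r u s) (hn : n < r + s) :
    chainLoop y l r u s n ≠ chainLoop y l r u s (n + 1) := by
  intro he
  rcases lt_or_ge n r with hnr | hnr
  · rw [chainLoop_lower hnr.le, chainLoop_lower hnr] at he
    exact (h.strictMono_lower n.lt_succ_self).ne (congrArg Prod.fst he)
  · obtain ⟨m, hm⟩ := Nat.exists_eq_add_of_lt hn
    rw [h.chainLoop_upper (m := m + 1) (by omega) (by omega),
      h.chainLoop_upper (m := m) (by omega) (by omega)] at he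
    exact (h.strictMono_upper m.lt_succ_self).ne' (congrArg Prod.fst he)

lemma eq_end_of_mem_graphs (h : IsChainPair y l r u s) (hz : z.1 ∈ Set.Icc (l 0) (l r))
    (hzl : z.2 = interp l y r z.1) (hzu : z.2 = interp u y s z.1) :
    z = graphPt y (l 0) ∨ z = graphPt y (l r) := by
  have hmono := h.strictMono_lower.monotone
  rcases hz.1.eq_or_lt with h0 | h0
  · exact Or.inl (Prod.ext h0.symm (by rw [hzl, ← h0, interp_node hmono r.zero_le, graphPt]))
  rcases hz.2.eq_or_lt with h1 | h1
  · exact Or.inr (Prod.ext h1 (by rw [hzl, h1, interp_node hmono le_rfl, graphPt]))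
  · exact absurd (hzl.symm.trans hzu) (h.interp_lt z.1 ⟨h0, h1⟩).ne

lemma edge_inter_lower_upper (h : IsChainPair y l r u s) (hi : i < r)
    (hjm : j + m + 1 = r + s) (hm : m < s)
    (hzi : z ∈ Seg (chainLoop y l r u s i) (chainLoop y l r u s (i + 1)))
    (hzj : z ∈ Seg (chainLoop y l r u s j) (chainLoop y l r u s (j + 1))) :
    j = i + 1 ∧ z = chainLoop y l r u s j ∨ i = 0 ∧ j + 1 = r + s ∧ z = chainLoop y l r u s 0 := by
  have hl := h.strictMono_lower
  have hu := h.strictMono_upper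
  rw [h.mem_edge_lower_iff hi] at hzi
  rw [h.mem_edge_upper_iff hjm hm] at hzj
  have hz : z.1 ∈ Set.Icc (l 0) (l r) :=
    ⟨(hl.monotone i.zero_le).trans hzi.1.1, hzi.1.2.trans (hl.monotone hi)⟩
  rcases h.eq_end_of_mem_graphs hz hzi.2 hzj.2 with rfl | rfl
  · have hi0 : i ≤ 0 := hl.le_iff_le.1 hzi.1.1
    have hm0 : m ≤ 0 := hu.le_iff_le.1 (hzj.1.1.trans_eq h.left_eq)
    exact Or.inr ⟨by omega, by omega, (chainLoop_lower r.zero_le).symm⟩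
  · have hri : r ≤ i + 1 := hl.le_iff_le.1 hzi.1.2
    have hsm : s ≤ m + 1 := hu.le_iff_le.1 (h.right_eq.symm.trans_le hzj.1.2)
    obtain rfl : j = r := by omega
    exact Or.inl ⟨by omega, (chainLoop_lower le_rfl).symm⟩

lemma edge_inter (h : IsChainPair y l r u s) (hij : i < j) (hj : j < r + s)
    (hzi : z ∈ Seg (chainLoop y l r u s i) (chainLoop y l r u s (i + 1)))
    (hzj : z ∈ Seg (chainLoop y l r u s j) (chainLoop y l r u s (j + 1))) :
    j = i + 1 ∧ z = chainLoop y l r u s j ∨ i = 0 ∧ j + 1 = r + s ∧ z = chainLoop y l r u s 0 := by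
  have hl := h.strictMono_lower
  have hu := h.strictMono_upper
  rcases lt_or_ge j r with hjr | hjr
  · rw [h.mem_edge_lower_iff (hij.trans hjr)] at hzi
    rw [h.mem_edge_lower_iff hjr] at hzj
    have hz : z.1 = l j := (hzi.1.2.trans (hl.monotone hij)).antisymm hzj.1.1
    refine Or.inl ⟨le_antisymm (hl.le_iff_le.1 (hz ▸ hzi.1.2)) hij, ?_⟩
    rw [chainLoop_lower hjr.le]
    exact Prod.ext hz (by rw [hzj.2, hz, interp_node hl.monotone hjr.le, graphPt])
  obtain ⟨m, hm⟩ := Nat.exists_eq_add_of_lt hj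
  rcases lt_or_ge i r with hir | hir
  · exact h.edge_inter_lower_upper hir hm.symm (by omega) hzi hzj
  · obtain ⟨m', hm'⟩ := Nat.exists_eq_add_of_lt (hij.trans hj)
    rw [h.mem_edge_upper_iff hm'.symm (by omega)] at hzi
    rw [h.mem_edge_upper_iff hm.symm (by omega)] at hzj
    have hz : z.1 = u (m + 1) := hzj.1.2.antisymm ((hu.monotone (by omega)).trans hzi.1.1)
    have hm'm : m' ≤ m + 1 := hu.le_iff_le.1 (hz ▸ hzi.1.1)
    refine Or.inl ⟨by omega, ?_⟩
    rw [h.chainLoop_upper (m := m + 1) (by omega) (by omega)]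
    exact Prod.ext hz (by rw [hzj.2, hz, interp_node hu.monotone (by omega), graphPt])

lemma isSimpleClosedPath (h : IsChainPair y l r u s) :
    IsSimpleClosedPath (r + s) (chainLoop y l r u s) where
  three_le := h.three_le
  closed := by
    rw [h.chainLoop_upper (m := 0) (by omega) s.zero_le, chainLoop_lower r.zero_le, h.left_eq]
  ne_succ _ := h.chainLoop_ne_succ
  edge_inter _ _ _ := h.edge_inter

/-- The simple polygon bounded by the two chains. -/
def polygon (h : IsChainPair y l r u s) : SimplePolygon :=
  h.isSimpleClosedPath.polygon

lemma range_vtx_polygon (h : IsChainPair y l r u s) :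
    Set.range h.polygon.vtx =
      graphPt y '' (l '' Set.Iic r ∪ u '' Set.Iic s) := by
  rw [polygon, IsSimpleClosedPath.range_vtx_polygon]
  ext z
  constructor
  · rintro ⟨n, hn, rfl⟩
    rw [Set.mem_Iio] at hn
    rcases le_total n r with hnr | hnr
    · exact ⟨l n, Or.inl ⟨n, hnr, rfl⟩, (chainLoop_lower hnr).symm⟩
    · obtain ⟨m, hm⟩ := Nat.exists_eq_add_of_le hn.le
      have hms : m ≤ s := by omega
      exact ⟨u m, Or.inr ⟨m, hms, rfl⟩, (h.chainLoop_upper hm.symm hms).symm⟩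
  · have hs := h.upper_length_pos
    rintro ⟨_, ⟨n, hn, rfl⟩ | ⟨m, hm, rfl⟩, rfl⟩
    · exact ⟨n, Set.mem_Iio.2 (by rw [Set.mem_Iic] at hn; omega), chainLoop_lower hn⟩
    · rw [Set.mem_Iic] at hm
      rcases m.eq_zero_or_pos with rfl | hm0
      · exact ⟨0, Set.mem_Iio.2 (by omega), by rw [chainLoop_lower r.zero_le, h.left_eq]⟩
      · exact ⟨r + s - m, Set.mem_Iio.2 (by omega), h.chainLoop_upper (by omega) hm⟩

lemma mem_edgeUnion_polygon (h : IsChainPair y l r u s) :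
    z ∈ h.polygon.edgeUnion ↔
      z.1 ∈ Set.Icc (l 0) (l r) ∧ (z.2 = interp l y r z.1 ∨ z.2 = interp u y s z.1) := by
  have hlt := h.left_lt_right
  rw [polygon, IsSimpleClosedPath.mem_edgeUnion_polygon, and_or_left,
    ← exists_seg_graphPt_iff h.strictMono_lower.monotone hlt, h.left_eq, h.right_eq,
    ← exists_seg_graphPt_iff h.strictMono_upper.monotone (h.left_eq ▸ h.right_eq ▸ hlt)]
  constructor
  · rintro ⟨n, hn, hz⟩
    rcases lt_or_ge n r with hnr | hnr
    · rw [chainLoop_lower hnr.le, chainLoop_lower hnr] at hz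
      exact Or.inl ⟨n, hnr, hz⟩
    · obtain ⟨m, hm⟩ := Nat.exists_eq_add_of_lt hn
      have hms : m < s := by omega
      rw [h.mem_edge_upper_iff hm.symm hms,
        ← mem_seg_graphPt_iff h.strictMono_upper.monotone hms] at hz
      exact Or.inr ⟨m, hms, hz⟩
  · rintro (⟨n, hn, hz⟩ | ⟨m, hm, hz⟩)
    · refine ⟨n, by omega, ?_⟩
      rwa [chainLoop_lower hn.le, chainLoop_lower hn]
    · refine ⟨r + s - (m + 1), by omega, ?_⟩
      rwa [h.mem_edge_upper_iff (m := m) (by omega) hm,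
        ← mem_seg_graphPt_iff h.strictMono_upper.monotone hm]

lemma mem_closedRegion_polygon (h : IsChainPair y l r u s) (hz : z.1 ∈ Set.Icc (l 0) (l r))
    (hlz : interp l y r z.1 ≤ z.2) (hzu : z.2 ≤ interp u y s z.1) :
    z ∈ h.polygon.closedRegion := by
  by_cases hzE : z ∈ h.polygon.edgeUnion
  · exact Or.inl hzE
  have hl := h.strictMono_lower.monotone
  have hu := h.strictMono_upper.monotone
  refine Or.inr ⟨hzE, isBounded_connectedComponentIn_between (continuous_interp l y r)
    (continuous_interp u y s) ?_ ?_ (fun _ => h.mem_edgeUnion_polygon) hz hlz hzu hzE⟩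
  · rw [interp_node hl r.zero_le, h.left_eq, interp_node hu s.zero_le]
  · rw [interp_node hl le_rfl, h.right_eq, interp_node hu le_rfl]

end IsChainPair

end Chains

section Staircase

/-- A staircase: a finite set `A` on which `y` is monotone, takes at least two values, and takes
each of them at least twice. The point set it encodes is the graph of `y` over `A`. -/
structure IsStaircase (y : ℝ → ℝ) (A : Set ℝ) : Prop where
  finite : A.Finite
  monotoneOn : MonotoneOn y A
  exists_ne_apply_eq : ∀ a ∈ A, ∃ b ∈ A, b ≠ a ∧ y b = y a
  exists_apply_lt : ∃ a ∈ A, ∃ b ∈ A, y a < y b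

/-- The nodes of the upper chain: the first element of each level, and the whole top level. -/
def upperNodes (y : ℝ → ℝ) (A : Set ℝ) : Set ℝ :=
  {a ∈ A | (∀ b ∈ A, b < a → y b < y a) ∨ ∀ b ∈ A, y b ≤ y a}

/-- The nodes of the lower chain: the two extreme elements, and whatever `upperNodes` leaves. -/
def lowerNodes (y : ℝ → ℝ) (A : Set ℝ) : Set ℝ :=
  {a ∈ A | a ∉ upperNodes y A ∨ IsLeast A a ∨ IsGreatest A a}

namespace IsStaircase

variable {y : ℝ → ℝ} {A : Set ℝ} {a m M : ℝ} {l u : ℕ → ℝ} {r s : ℕ}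

lemma exists_isLeast (h : IsStaircase y A) : ∃ m, IsLeast A m :=
  let ⟨a, ha, _⟩ := h.exists_apply_lt
  h.finite.isCompact.exists_isLeast ⟨a, ha⟩

lemma exists_isGreatest (h : IsStaircase y A) : ∃ M, IsGreatest A M :=
  let ⟨a, ha, _⟩ := h.exists_apply_lt
  h.finite.isCompact.exists_isGreatest ⟨a, ha⟩

lemma apply_least_lt_apply_greatest (h : IsStaircase y A) (hm : IsLeast A m)
    (hM : IsGreatest A M) : y m < y M := by
  obtain ⟨a, ha, b, hb, hab⟩ := h.exists_apply_lt
  exact (h.monotoneOn hm.1 ha (hm.2 ha)).trans_lt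
    (hab.trans_le (h.monotoneOn hb hM.1 (hM.2 hb)))

lemma isLeast_upperNodes (hm : IsLeast A m) : IsLeast (upperNodes y A) m :=
  ⟨⟨hm.1, Or.inl fun _ hb hbm => absurd (hm.2 hb) hbm.not_ge⟩, fun _ ha => hm.2 ha.1⟩

lemma isGreatest_upperNodes (h : IsStaircase y A) (hM : IsGreatest A M) :
    IsGreatest (upperNodes y A) M :=
  ⟨⟨hM.1, Or.inr fun _ hb => h.monotoneOn hb hM.1 (hM.2 hb)⟩, fun _ ha => hM.2 ha.1⟩

lemma isLeast_lowerNodes (hm : IsLeast A m) : IsLeast (lowerNodes y A) m :=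
  ⟨⟨hm.1, Or.inr (Or.inl hm)⟩, fun _ ha => hm.2 ha.1⟩

lemma isGreatest_lowerNodes (hM : IsGreatest A M) : IsGreatest (lowerNodes y A) M :=
  ⟨⟨hM.1, Or.inr (Or.inr hM)⟩, fun _ ha => hM.2 ha.1⟩

lemma lowerNodes_union_upperNodes : lowerNodes y A ∪ upperNodes y A = A := by
  refine (Set.union_subset (Set.sep_subset ..) (Set.sep_subset ..)).antisymm fun a ha => ?_
  by_cases hau : a ∈ upperNodes y A
  · exact Or.inr hau
  · exact Or.inl ⟨ha, Or.inl hau⟩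

lemma apply_lt_of_mem_lowerNodes_of_lt (h : IsStaircase y A) {p : ℝ} (hp : p ∈ lowerNodes y A)
    (ha : a ∈ upperNodes y A) (hpa : p < a) : y p < y a := by
  rcases ha.2 with hrec | htop
  · exact hrec p hp.1 hpa
  refine (htop p hp.1).lt_of_ne fun he => ?_
  rcases hp.2 with hpu | hleast | hgreatest
  · exact hpu ⟨hp.1, Or.inr (he ▸ htop)⟩
  · obtain ⟨M, hM⟩ := h.exists_isGreatest
    exact (he ▸ htop M hM.1).not_gt (h.apply_least_lt_apply_greatest hleast hM)
  · exact (hgreatest.2 ha.1).not_gt hpa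

lemma exists_mem_lowerNodes_gt (h : IsStaircase y A) (ha : a ∈ upperNodes y A) {c : ℝ}
    (hc : c ∈ A) (hac : y a < y c) : ∃ b ∈ lowerNodes y A, a < b ∧ y b = y a := by
  have hrec := ha.2.resolve_right fun htop => (htop c hc).not_gt hac
  obtain ⟨b, hb, hne, hyb⟩ := h.exists_ne_apply_eq a ha.1
  have hab : a < b := hne.lt_or_gt.resolve_left fun hba => (hrec b hb hba).ne hyb
  refine ⟨b, ⟨hb, Or.inl ?_⟩, hab, hyb⟩
  rintro ⟨-, hrec' | htop⟩
  · exact (hrec' a ha.1 hab).ne' hyb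
  · exact (htop c hc).not_gt (hyb ▸ hac)

lemma exists_mem_upperNodes_lt (h : IsStaircase y A) (ha : a ∈ A) (hau : a ∉ upperNodes y A) :
    ∃ c ∈ upperNodes y A, c < a ∧ y a ≤ y c := by
  obtain ⟨c, ⟨hcA, hac⟩, hc⟩ := (h.finite.sep (y a ≤ y ·)).isCompact.exists_isLeast ⟨a, ha, le_rfl⟩
  have hcu : c ∈ upperNodes y A := ⟨hcA, Or.inl fun d hd hdc =>
    lt_of_not_ge fun hcd => hdc.not_ge (hc ⟨hd, hac.trans hcd⟩)⟩
  exact ⟨c, hcu, (hc ⟨ha, le_rfl⟩).lt_of_ne (by rintro rfl; exact hau hcu), hac⟩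

lemma interp_lower_lt (h : IsStaircase y A) (hl : StrictMono l)
    (hlA : l '' Set.Iic r = lowerNodes y A) (hm : IsLeast A (l 0)) (hM : IsGreatest A (l r))
    (ha : a ∈ A) (hal : a ∉ lowerNodes y A) : interp l y r a < y a := by
  have hau : a ∈ upperNodes y A := by_contra fun hau => hal ⟨ha, Or.inl hau⟩
  have hx : a ∈ Set.Ioo (l 0) (l r) :=
    ⟨(hm.2 ha).lt_of_ne (by rintro rfl; exact hal (isLeast_lowerNodes hm).1),
      (hM.2 ha).lt_of_ne (by rintro rfl; exact hal (isGreatest_lowerNodes hM).1)⟩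
  obtain ⟨i, hi, hai, hgap⟩ := exists_gap hl hx (hlA ▸ hal)
  rw [hlA] at hgap
  have hp : l i ∈ lowerNodes y A := hlA ▸ ⟨i, hi.le, rfl⟩
  have hq : l (i + 1) ∈ lowerNodes y A := hlA ▸ ⟨i + 1, hi, rfl⟩
  have hyp : y (l i) < y a := h.apply_lt_of_mem_lowerNodes_of_lt hp hau hai.1
  have hyq : y (l (i + 1)) ≤ y a := by
    by_contra! hlt
    obtain ⟨b, hb, hab, hyb⟩ := h.exists_mem_lowerNodes_gt hau hq.1 hlt
    have hqb := (hgap b hb).resolve_left (hai.1.trans hab).not_ge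
    exact (h.monotoneOn hq.1 hb.1 hqb).not_gt (hyb ▸ hlt)
  have hlt := (convex_Iic (y a)).openSegment_interior_self_subset_interior (by simpa using hyp) hyq
    (interp_mem_openSegment hl.monotone hi hai)
  simpa using hlt

lemma lt_interp_upper (h : IsStaircase y A) (hu : StrictMono u)
    (huA : u '' Set.Iic s = upperNodes y A) (hm : IsLeast A (u 0)) (hM : IsGreatest A (u s))
    (ha : a ∈ A) (hau : a ∉ upperNodes y A) : y a < interp u y s a := by
  have hx : a ∈ Set.Ioo (u 0) (u s) :=
    ⟨(hm.2 ha).lt_of_ne (by rintro rfl; exact hau (isLeast_upperNodes hm).1),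
      (hM.2 ha).lt_of_ne (by rintro rfl; exact hau (h.isGreatest_upperNodes hM).1)⟩
  obtain ⟨i, hi, hai, hgap⟩ := exists_gap hu hx (huA ▸ hau)
  rw [huA] at hgap
  have hp : u i ∈ upperNodes y A := huA ▸ ⟨i, hi.le, rfl⟩
  have hq : u (i + 1) ∈ upperNodes y A := huA ▸ ⟨i + 1, hi, rfl⟩
  have hyp : y a ≤ y (u i) := by
    obtain ⟨c, hc, hca, hac⟩ := h.exists_mem_upperNodes_lt ha hau
    have hcp := (hgap c hc).resolve_right (hca.trans hai.2).not_ge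
    exact hac.trans (h.monotoneOn hc.1 hp.1 hcp)
  have hyq : y a < y (u (i + 1)) := by
    rcases hq.2 with hrec | htop
    · exact hrec a ha hai.2
    · exact (htop a ha).lt_of_ne fun he => hau ⟨ha, Or.inr (he ▸ htop)⟩
  have hlt := (convex_Ici (y a)).openSegment_self_interior_subset_interior hyp (by simpa using hyq)
    (interp_mem_openSegment hu.monotone hi hai)
  simpa using hlt

lemma two_le_of_image_eq_upperNodes (h : IsStaircase y A)
    (huA : u '' Set.Iic s = upperNodes y A) (hm : IsLeast A (u 0)) (hM : IsGreatest A (u s)) :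
    2 ≤ s := by
  obtain ⟨b, hb, hbM, hyb⟩ := h.exists_ne_apply_eq _ hM.1
  have hbu : b ∈ upperNodes y A := ⟨hb, Or.inr fun c hc => by
    rw [hyb]; exact h.monotoneOn hc hM.1 (hM.2 hc)⟩
  obtain ⟨j, hj, rfl⟩ := huA ▸ hbu
  have hj0 : j ≠ 0 := by
    rintro rfl
    exact (h.apply_least_lt_apply_greatest hm hM).ne hyb
  have hjs : j ≠ s := by rintro rfl; exact hbM rfl
  rw [Set.mem_Iic] at hj
  omega

lemma isChainPair (h : IsStaircase y A) (hl : StrictMono l) (hu : StrictMono u)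
    (hlA : l '' Set.Iic r = lowerNodes y A) (huA : u '' Set.Iic s = upperNodes y A)
    (h0 : l 0 = u 0) (h1 : l r = u s) (hm : IsLeast A (l 0)) (hM : IsGreatest A (l r)) :
    IsChainPair y l r u s := by
  have hlr := h.apply_least_lt_apply_greatest hm hM
  have hr : r ≠ 0 := by rintro rfl; exact hlr.false
  have hs := h.two_le_of_image_eq_upperNodes huA (h0 ▸ hm) (h1 ▸ hM)
  have hlower {c : ℝ} (hc : c ∈ A) := h.interp_lower_lt hl hlA hm hM hc
  have hupper {c : ℝ} (hc : c ∈ A) := h.lt_interp_upper hu huA (h0 ▸ hm) (h1 ▸ hM) hc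
  refine ⟨hl, hu, h0, h1, by omega, fun x => interp_lt_interp hl hu h0 h1 (by omega) ?_⟩
  rintro _ (⟨i, rfl⟩ | ⟨j, rfl⟩) hc
  · have hi : i ≤ r := (hl.lt_iff_lt.1 hc.2).le
    have hil : l i ∈ lowerNodes y A := hlA ▸ ⟨i, hi, rfl⟩
    rw [interp_node hl.monotone hi]
    refine hupper hil.1 (hil.2.resolve_right ?_)
    rintro (hleast | hgreatest)
    · exact hc.1.ne (hm.unique hleast)
    · exact hc.2.ne (hgreatest.unique hM)
  · have hj : j ≤ s := (hu.lt_iff_lt.1 (h1 ▸ hc.2)).le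
    have hju : u j ∈ upperNodes y A := huA ▸ ⟨j, hj, rfl⟩
    rw [interp_node hu.monotone hj]
    refine hlower hju.1 ?_
    rintro ⟨-, hnot | hleast | hgreatest⟩
    · exact hnot hju
    · exact hc.1.ne (hm.unique hleast)
    · exact hc.2.ne (hgreatest.unique hM)

lemma exists_isChainPair (h : IsStaircase y A) :
    ∃ (l : ℕ → ℝ) (r : ℕ) (u : ℕ → ℝ) (s : ℕ), IsChainPair y l r u s ∧
      l '' Set.Iic r = lowerNodes y A ∧ u '' Set.Iic s = upperNodes y A ∧
      IsLeast A (l 0) ∧ IsGreatest A (l r) := by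
  obtain ⟨m, hm⟩ := h.exists_isLeast
  obtain ⟨M, hM⟩ := h.exists_isGreatest
  obtain ⟨l, r, hl, hlA, hl0, hlr⟩ := exists_strictMono_image_Iic
    (h.finite.subset (Set.sep_subset ..)) (isLeast_lowerNodes (y := y) hm)
    (isGreatest_lowerNodes hM)
  obtain ⟨u, s, hu, huA, hu0, hus⟩ := exists_strictMono_image_Iic
    (h.finite.subset (Set.sep_subset ..)) (isLeast_upperNodes hm) (h.isGreatest_upperNodes hM)
  rw [← hl0] at hm hu0
  rw [← hlr] at hM hus
  exact ⟨l, r, u, s, h.isChainPair hl hu hlA huA hu0.symm hus.symm hm hM, hlA, huA, hm, hM⟩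

/-- Both interpolations are monotone, so along a level it is enough to compare them with `y` at the
right and at the left end respectively. -/
lemma seg_subset_closedRegion (h : IsStaircase y A) (hc : IsChainPair y l r u s)
    (hlA : l '' Set.Iic r = lowerNodes y A) (huA : u '' Set.Iic s = upperNodes y A)
    (hm : IsLeast A (l 0)) (hM : IsGreatest A (l r)) {b : ℝ} (ha : a ∈ A) (hb : b ∈ A)
    (hab : a ≤ b) (hy : y a = y b) :
    Seg (graphPt y a) (graphPt y b) ⊆ hc.polygon.closedRegion := by
  have hl := hc.strictMono_lower
  have hu := hc.strictMono_upper
  have hlower : interp l y r b ≤ y b := by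
    by_cases hbl : b ∈ lowerNodes y A
    · obtain ⟨i, hi, rfl⟩ := hlA ▸ hbl
      exact (interp_node hl.monotone hi).le
    · exact (h.interp_lower_lt hl hlA hm hM hb hbl).le
  have hupper : y a ≤ interp u y s a := by
    by_cases hau : a ∈ upperNodes y A
    · obtain ⟨i, hi, rfl⟩ := huA ▸ hau
      exact (interp_node hu.monotone hi).ge
    · exact (h.lt_interp_upper hu huA (hc.left_eq ▸ hm) (hc.right_eq ▸ hM) ha hau).le
  have hmono_lower : Monotone (interp l y r) :=
    monotone_interp (h.monotoneOn.mono (hlA.trans_subset (Set.sep_subset ..)))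
  have hmono_upper : Monotone (interp u y s) :=
    monotone_interp (h.monotoneOn.mono (huA.trans_subset (Set.sep_subset ..)))
  intro z hz
  have hx : z.1 ∈ Set.Icc a b := segment_eq_Icc hab ▸ (Prod.segment_subset _ _ hz).1
  have hz2 : z.2 = y b := by
    have := (Prod.segment_subset _ _ hz).2
    simpa [graphPt, hy, segment_same] using this
  refine hc.mem_closedRegion_polygon ⟨(hm.2 ha).trans hx.1, hx.2.trans (hM.2 hb)⟩ ?_ ?_
  · exact hz2 ▸ (hmono_lower hx.2).trans hlower
  · exact (hz2.trans hy.symm) ▸ hupper.trans (hmono_upper hx.1)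

lemma exists_polygon (h : IsStaircase y A) :
    ∃ P : SimplePolygon, Set.range P.vtx = graphPt y '' A ∧
      ∀ a ∈ A, ∀ b ∈ A, y a = y b → Seg (graphPt y a) (graphPt y b) ⊆ P.closedRegion := by
  obtain ⟨l, r, u, s, hc, hlA, huA, hm, hM⟩ := h.exists_isChainPair
  refine ⟨hc.polygon, ?_, fun a ha b hb hy => ?_⟩
  · rw [hc.range_vtx_polygon, hlA, huA, lowerNodes_union_upperNodes]
  · rcases le_total a b with hab | hba
    · exact h.seg_subset_closedRegion hc hlA huA hm hM ha hb hab hy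
    · rw [Seg, segment_symm, ← Seg]
      exact h.seg_subset_closedRegion hc hlA huA hm hM hb ha hba hy.symm

end IsStaircase

end Staircase

section Coordinates

lemma exists_staircase_coordinates {W : Set Pt} (hW : W.Finite) {v : Pt} (hv : v ≠ 0) :
    ∃ e : Pt ≃L[ℝ] Pt, (e v).2 = 0 ∧
      ∀ p ∈ W, ∀ q ∈ W, (e p).2 < (e q).2 → (e p).1 < (e q).1 := by
  obtain ⟨g, hg⟩ := SeparatingDual.exists_continuousLinearEquiv_apply_eq (R := ℝ) hv
    (show ((0, 1) : Pt) ≠ 0 by simp)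
  have hlarge : ∀ᶠ c : ℝ in Filter.atTop, ∀ p ∈ W, ∀ q ∈ W, (g p).1 < (g q).1 →
      (g p).2 + c * (g p).1 < (g q).2 + c * (g q).1 := by
    simp only [Filter.eventually_all_finite hW, Filter.eventually_imp_distrib_left]
    intro p _ q _ hpq
    filter_upwards [(Filter.tendsto_id.atTop_mul_const (sub_pos.2 hpq)).eventually_gt_atTop
      ((g p).2 - (g q).2)] with c hc
    linarith [show c * ((g q).1 - (g p).1) > (g p).2 - (g q).2 from hc]
  obtain ⟨c, hc⟩ := hlarge.exists
  let shear : Pt ≃L[ℝ] Pt := (ContinuousLinearEquiv.refl ℝ ℝ).skewProd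
    (ContinuousLinearEquiv.refl ℝ ℝ) (c • ContinuousLinearMap.id ℝ ℝ)
  refine ⟨g.trans (shear.trans (ContinuousLinearEquiv.prodComm ℝ ℝ ℝ)), ?_, hc⟩
  change (g v).1 = 0
  rw [hg]

lemma collinear_of_forall_snd_eq {W : Set Pt} (e : Pt ≃L[ℝ] Pt)
    (he : ∀ p ∈ W, ∀ q ∈ W, (e p).2 = (e q).2) : Collinear ℝ W := by
  obtain rfl | ⟨q, hq⟩ := W.eq_empty_or_nonempty
  · exact collinear_empty ℝ Pt
  refine (collinear_iff_of_mem hq).2 ⟨e.symm (1, 0), fun p hp => ⟨(e p).1 - (e q).1, ?_⟩⟩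
  apply e.injective
  ext <;> simp [he p hp q hq]

lemma exists_isStaircase {W : Set Pt} (hW : W.Finite)
    (hmono : ∀ p ∈ W, ∀ q ∈ W, p.2 < q.2 → p.1 < q.1)
    (hrow : ∀ p ∈ W, ∃ q ∈ W, q ≠ p ∧ q.2 = p.2) (hlt : ∃ p ∈ W, ∃ q ∈ W, p.2 < q.2) :
    ∃ (y : ℝ → ℝ) (A : Set ℝ), IsStaircase y A ∧ graphPt y '' A = W := by
  have hinj : Set.InjOn Prod.fst W := fun p hp q hq hpq => by
    refine Prod.ext hpq (le_antisymm ?_ ?_) <;> refine le_of_not_gt fun h => ?_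
    · exact (hmono q hq p hp h).ne' hpq
    · exact (hmono p hp q hq h).ne hpq
  let y : ℝ → ℝ := fun x => (Function.invFunOn Prod.fst W x).2
  have hy {p : Pt} (hp : p ∈ W) : y p.1 = p.2 := congrArg Prod.snd (hinj.leftInvOn_invFunOn hp)
  refine ⟨y, Prod.fst '' W, ⟨hW.image _, ?_, ?_, ?_⟩, ?_⟩
  · rintro _ ⟨p, hp, rfl⟩ _ ⟨q, hq, rfl⟩ hpq
    rw [hy hp, hy hq]
    exact le_of_not_gt fun h => (hmono q hq p hp h).not_ge hpq
  · rintro _ ⟨p, hp, rfl⟩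
    obtain ⟨q, hq, hne, hqp⟩ := hrow p hp
    exact ⟨q.1, ⟨q, hq, rfl⟩, hinj.ne hq hp hne, by rw [hy hp, hy hq, hqp]⟩
  · obtain ⟨p, hp, q, hq, hpq⟩ := hlt
    exact ⟨p.1, ⟨p, hp, rfl⟩, q.1, ⟨q, hq, rfl⟩, by rwa [hy hp, hy hq]⟩
  · have hgraph : Set.EqOn (fun p : Pt => graphPt y p.1) id W := fun p hp => Prod.ext rfl (hy hp)
    rw [Set.image_image, hgraph.image_eq, Set.image_id]

lemma finite_segEndpoints (S : Finset (Pt × Pt)) : (SegEndpoints S).Finite :=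
  S.finite_toSet.biUnion fun _ _ => Set.toFinite _

lemma mem_segEndpoints {S : Finset (Pt × Pt)} {p : Pt} :
    p ∈ SegEndpoints S ↔ ∃ s ∈ S, p = s.1 ∨ p = s.2 := by
  simp [SegEndpoints]

lemma exists_ne_snd_eq {S : Finset (Pt × Pt)} (hne : ∀ s ∈ S, s.1 ≠ s.2) {e : Pt ≃L[ℝ] Pt}
    (hrow : ∀ s ∈ S, (e s.1).2 = (e s.2).2) :
    ∀ p ∈ e '' SegEndpoints S, ∃ q ∈ e '' SegEndpoints S, q ≠ p ∧ q.2 = p.2 := by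
  rintro _ ⟨p, hp, rfl⟩
  obtain ⟨s, hs, rfl | rfl⟩ := mem_segEndpoints.1 hp
  · exact ⟨e s.2, ⟨s.2, mem_segEndpoints.2 ⟨s, hs, Or.inr rfl⟩, rfl⟩,
      e.injective.ne (hne s hs).symm, (hrow s hs).symm⟩
  · exact ⟨e s.1, ⟨s.1, mem_segEndpoints.2 ⟨s, hs, Or.inl rfl⟩, rfl⟩,
      e.injective.ne (hne s hs), hrow s hs⟩

lemma exists_snd_lt {W : Set Pt} (hnc : ¬ Collinear ℝ W) (e : Pt ≃L[ℝ] Pt) :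
    ∃ p ∈ e '' W, ∃ q ∈ e '' W, p.2 < q.2 := by
  simp only [Set.exists_mem_image]
  by_contra! h
  exact hnc (collinear_of_forall_snd_eq e fun p hp q hq => (h q hq p hp).antisymm (h p hp q hq))

end Coordinates

theorem parallel_circumscribing_general (S : Finset (Pt × Pt)) (hne : ∀ s ∈ S, s.1 ≠ s.2)
    (hpar : ∃ v : Pt, v ≠ 0 ∧ ∀ s ∈ S, ∃ c : ℝ, s.2 - s.1 = c • v)
    (hnc : ¬ Collinear ℝ (SegEndpoints S)) :
    ∃ P : SimplePolygon, IsCircumscribing S P := by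
  obtain ⟨v, hv, hpar⟩ := hpar
  obtain ⟨e, hev, hmono⟩ := exists_staircase_coordinates (finite_segEndpoints S) hv
  have hrow : ∀ s ∈ S, (e s.1).2 = (e s.2).2 := by
    intro s hs
    obtain ⟨c, hc⟩ := hpar s hs
    rw [sub_eq_iff_eq_add.1 hc]
    simp [hev]
  obtain ⟨y, A, hA, hgraph⟩ := exists_isStaircase ((finite_segEndpoints S).image e)
    (by simpa only [Set.forall_mem_image] using hmono) (exists_ne_snd_eq hne hrow)
    (exists_snd_lt hnc e)
  obtain ⟨P, hPvtx, hPseg⟩ := hA.exists_polygon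
  refine ⟨P.map e.symm, ?_, fun s hs => ?_⟩
  · rw [P.range_vtx_map, hPvtx, hgraph, e.symm_image_image]
  · obtain ⟨a, ha, hs₁⟩ := hgraph ▸ Set.mem_image_of_mem e (mem_segEndpoints.2 ⟨s, hs, Or.inl rfl⟩)
    obtain ⟨b, hb, hs₂⟩ := hgraph ▸ Set.mem_image_of_mem e (mem_segEndpoints.2 ⟨s, hs, Or.inr rfl⟩)
    have hy : y a = y b :=
      (congrArg Prod.snd hs₁).trans ((hrow s hs).trans (congrArg Prod.snd hs₂).symm)
    rw [← e.symm_apply_apply s.1, ← e.symm_apply_apply s.2, ← hs₁, ← hs₂, ← image_seg]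
    exact (Set.image_mono (hPseg a ha b hb hy)).trans (P.image_closedRegion_subset e.symm)

/-- A family of at least two pairwise disjoint parallel segments whose
endpoints are not all collinear admits a circumscribing polygon. -/
theorem parallel_circumscribing (S : Finset (Pt × Pt)) (hcard : 2 ≤ S.card)
    (hdisj : DisjointFamily S)
    (hpar : ∃ v : Pt, v ≠ 0 ∧ ∀ s ∈ S, ∃ c : ℝ, s.2 - s.1 = c • v)
    (hnc : ¬ Collinear ℝ (SegEndpoints S)) :
    ∃ P : SimplePolygon, IsCircumscribing S P :=
  parallel_circumscribing_general S hdisj.1 hpar hnc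
end
end

section
/- Let P = (p_0, …, p_{k−1}) be a simple polygon in ℝ² whose vertex set V contains no three collinear points. Then the vertices of P that are extreme points of conv(V) occur along P in the same cyclic order as along the boundary of conv(V); that is, there is a choice of orientation of the cyclic sequence of P such that restricting it to the extreme points of conv(V) yields the counterclockwise cyclic order of the extreme points around conv(V). -/
noncomputable section

/-- The planar cross product (signed area determinant). -/
def cross2 (u v : Pt) : ℝ := u.1 * v.2 - u.2 * v.1

/-!
Let `p` and `q` be disjoint polygonal paths and consider the vectors `p s - q t`, with `(s, t)`
ranging over a grid. Around a unit cell of the grid the signed angles between consecutive vectors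
add up to zero: the four vectors are differences of points on two disjoint segments, so they lie in
an open half-plane. Hence the angles around the whole grid add up to zero. If the endpoints of each
path lie outside the convex hull of the other path, then the angles along each side of the grid
collapse to a single angle, and the four resulting signs show that the segments joining the
endpoints of `p` and of `q` do not cross.

Four hull vertices `a`, `b`, `c`, `d` met in this order along a simple polygon therefore satisfy:
`ab` does not cross `cd`, and `bc` does not cross `da`. Being in convex position, they form the
convex quadrilateral `abcd`, so its four subtriples have the same orientation. A function on
increasing triples which agrees on the four subtriples of each increasing quadruple is constant.
-/

section Separation

variable {E : Type*} [AddCommGroup E] [Module ℝ E]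

lemma notMem_convexHull_of_mem_extremePoints {s t : Set E} {a : E}
    (ha : a ∈ (convexHull ℝ s).extremePoints ℝ) (hts : t ⊆ s) (hat : a ∉ t) :
    a ∉ convexHull ℝ t := fun h =>
  ((convex_convexHull ℝ s).mem_extremePoints_iff_mem_sdiff_convexHull_sdiff.1 ha).2 <|
    convexHull_mono (Set.subset_sdiff_singleton (hts.trans (subset_convexHull ℝ s)) hat) h

lemma exists_forall_lt_of_disjoint_convexHull [TopologicalSpace E] [IsTopologicalAddGroup E]
    [ContinuousSMul ℝ E] [LocallyConvexSpace ℝ E] [T2Space E] {s t : Set E}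
    (hs : s.Finite) (ht : t.Finite) (hst : Disjoint (convexHull ℝ s) (convexHull ℝ t)) :
    ∃ f : E →L[ℝ] ℝ, ∀ a ∈ s, ∀ b ∈ t, f b < f a := by
  obtain ⟨f, u, v, hu, huv, hv⟩ := geometric_hahn_banach_compact_closed
    (convex_convexHull ℝ t) (ht.isCompact_convexHull ℝ) (convex_convexHull ℝ s)
    (hs.isClosed_convexHull ℝ) hst.symm
  exact ⟨f, fun a ha b hb => ((hu b (subset_convexHull ℝ t hb)).trans huv).trans
    (hv a (subset_convexHull ℝ s ha))⟩

lemma exists_forall_lt_of_notMem_convexHull [TopologicalSpace E] [IsTopologicalAddGroup E]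
    [ContinuousSMul ℝ E] [LocallyConvexSpace ℝ E] [T2Space E] {s : Set E} {a : E}
    (hs : s.Finite) (ha : a ∉ convexHull ℝ s) : ∃ f : E →L[ℝ] ℝ, ∀ b ∈ s, f b < f a := by
  obtain ⟨f, hf⟩ := exists_forall_lt_of_disjoint_convexHull (Set.finite_singleton a) hs
    (by simpa using ha)
  exact ⟨f, hf a (Set.mem_singleton a)⟩

end Separation

lemma clm_apply_eq_coord (f : Pt →L[ℝ] ℝ) (u : Pt) : f u = f (1, 0) * u.1 + f (0, 1) * u.2 := by
  calc f u = f (u.1 • (1, 0) + u.2 • (0, 1)) := by simp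
    _ = f (1, 0) * u.1 + f (0, 1) * u.2 := by
      simp only [map_add, map_smul, smul_eq_mul, mul_comm]

section Orientation

/-- The orientation of the triangle `abc`, as twice its signed area: positive if and only if `abc`
is traversed counterclockwise. -/
def orient (a b c : Pt) : ℝ := cross2 (b - a) (c - a)

lemma orient_rotate (a b c : Pt) : orient b c a = orient a b c := by
  simp only [orient, cross2, Prod.fst_sub, Prod.snd_sub]; ring

lemma orient_swap (a b c : Pt) : orient a c b = -orient a b c := by
  simp only [orient, cross2]; ring

lemma collinear_of_orient_eq_zero {a b c : Pt} (h : orient a b c = 0) :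
    Collinear ℝ ({c, a, b} : Set Pt) := by
  by_cases hab : a = b
  · simpa [hab] using collinear_pair ℝ c b
  set N : ℝ := (b.1 - a.1) ^ 2 + (b.2 - a.2) ^ 2 with hN
  have hN_ne : N ≠ 0 := fun hN0 => hab <| Prod.ext
    (by nlinarith [sq_nonneg (b.1 - a.1), sq_nonneg (b.2 - a.2)])
    (by nlinarith [sq_nonneg (b.1 - a.1), sq_nonneg (b.2 - a.2)])
  -- The orthogonal projection of `c` on the line `ab` is `c` itself.
  have hc : AffineMap.lineMap a b
      (((c.1 - a.1) * (b.1 - a.1) + (c.2 - a.2) * (b.2 - a.2)) / N) = c := by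
    simp only [orient, cross2, Prod.fst_sub, Prod.snd_sub] at h
    ext <;> simp only [AffineMap.lineMap_apply_module', Prod.fst_add, Prod.snd_add, Prod.smul_fst,
      Prod.smul_snd, Prod.fst_sub, Prod.snd_sub, smul_eq_mul] <;> field_simp <;> rw [hN]
    · linear_combination (b.2 - a.2) * h
    · linear_combination -(b.1 - a.1) * h
  exact collinear_insert_of_mem_affineSpan_pair
    (hc ▸ AffineMap.lineMap_mem_affineSpan_pair _ a b)

lemma orient_ne_zero_of_convexIndependent {ι : Type*} {v : ι → Pt} (hv : ConvexIndependent ℝ v)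
    {i j l : ι} (hij : i ≠ j) (hil : i ≠ l) (hjl : j ≠ l) : orient (v i) (v j) (v l) ≠ 0 := by
  have notMem_segment {x y z : ι} (hxy : x ≠ y) (hxz : x ≠ z) : v x ∉ segment ℝ (v y) (v z) := by
    intro h
    simpa [hxy, hxz] using hv {y, z} x (by rwa [Set.image_pair, convexHull_pair])
  intro h
  rcases (collinear_of_orient_eq_zero h).wbtw_or_wbtw_or_wbtw with h | h | h
  · exact notMem_segment hil hij h.mem_segment
  · exact notMem_segment hij.symm hjl h.mem_segment
  · exact notMem_segment hjl.symm hil.symm h.mem_segment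

lemma mem_convexHull_of_orient_pos {a b c d : Pt} (hbc : 0 < orient a b c)
    (hcd : 0 < orient a c d) (hdb : 0 < orient a d b) : a ∈ convexHull ℝ {b, c, d} := by
  by_contra ha
  obtain ⟨f, hf⟩ := exists_forall_lt_of_notMem_convexHull (Set.toFinite _) ha
  have barycentric : orient a c d * (f a - f b) + orient a d b * (f a - f c) +
      orient a b c * (f a - f d) = 0 := by
    rw [clm_apply_eq_coord f a, clm_apply_eq_coord f b, clm_apply_eq_coord f c,
      clm_apply_eq_coord f d]
    simp only [orient, cross2, Prod.fst_sub, Prod.snd_sub]; ring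
  have hb := mul_pos hcd (sub_pos.2 (hf b (by simp)))
  have hc := mul_pos hdb (sub_pos.2 (hf c (by simp)))
  have hd := mul_pos hbc (sub_pos.2 (hf d (by simp)))
  linarith

lemma not_orient_pos_of_convexIndependent {ι : Type*} {v : ι → Pt} (hv : ConvexIndependent ℝ v)
    {i j l m : ι} (hij : i ≠ j) (hil : i ≠ l) (him : i ≠ m) :
    ¬ (0 < orient (v i) (v j) (v l) ∧ 0 < orient (v i) (v l) (v m) ∧
      0 < orient (v i) (v m) (v j)) := by
  rintro ⟨hjl, hlm, hmj⟩
  have hmem := mem_convexHull_of_orient_pos hjl hlm hmj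
  rw [← Set.image_singleton, ← Set.image_insert_eq, ← Set.image_insert_eq] at hmem
  simpa [hij, hil, him] using hv _ _ hmem

/-- The points `a`, `b`, `c`, `d` are, in this cyclic order, the vertices of a strictly convex
quadrilateral, traversed in either direction: all triples chosen from them in this order have the
same orientation. Equivalently, the open diagonals `ac` and `bd` cross. -/
def IsConvexQuad (a b c d : Pt) : Prop :=
  (0 < orient a b c ∧ 0 < orient a b d ∧ 0 < orient a c d ∧ 0 < orient b c d) ∨
    (orient a b c < 0 ∧ orient a b d < 0 ∧ orient a c d < 0 ∧ orient b c d < 0)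

lemma IsConvexQuad.rotate {a b c d : Pt} (h : IsConvexQuad a b c d) : IsConvexQuad b c d a := by
  rw [IsConvexQuad, orient_rotate a b c, orient_rotate a b d, orient_rotate a c d]
  unfold IsConvexQuad at h
  tauto

lemma IsConvexQuad.sign_orient_eq {a b c d : Pt} (h : IsConvexQuad a b c d) :
    SignType.sign (orient a b c) = SignType.sign (orient a b d) ∧
      SignType.sign (orient a b d) = SignType.sign (orient a c d) ∧
      SignType.sign (orient a c d) = SignType.sign (orient b c d) := by
  rcases h with ⟨h₁, h₂, h₃, h₄⟩ | ⟨h₁, h₂, h₃, h₄⟩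
  · simp only [sign_pos, h₁, h₂, h₃, h₄, and_self]
  · simp only [sign_neg, h₁, h₂, h₃, h₄, and_self]

lemma isConvexQuad_or_of_convexIndependent {ι : Type*} {v : ι → Pt} (hv : ConvexIndependent ℝ v)
    {i j l m : ι} (hij : i ≠ j) (hil : i ≠ l) (him : i ≠ m) (hjl : j ≠ l) (hjm : j ≠ m)
    (hlm : l ≠ m) :
    IsConvexQuad (v i) (v j) (v l) (v m) ∨ IsConvexQuad (v i) (v l) (v j) (v m) ∨
      IsConvexQuad (v i) (v j) (v m) (v l) := by
  have hijl := orient_ne_zero_of_convexIndependent hv hij hil hjl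
  have hijm := orient_ne_zero_of_convexIndependent hv hij him hjm
  have hilm := orient_ne_zero_of_convexIndependent hv hil him hlm
  have hjlm := orient_ne_zero_of_convexIndependent hv hjl hjm hlm
  have not_inside {a b c d : ι} (hab : a ≠ b) (hac : a ≠ c) (had : a ≠ d) :=
    And.intro (not_orient_pos_of_convexIndependent hv hab hac had)
      (not_orient_pos_of_convexIndependent hv had hac hab)
  have hi := not_inside hij hil him
  have hj := not_inside hij.symm hjl hjm
  have hl := not_inside hil.symm hjl.symm hlm
  have hm := not_inside him.symm hjm.symm hlm.symm
  have permute (x y z : Pt) : orient y z x = orient x y z ∧ orient z x y = orient x y z ∧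
      orient x z y = -orient x y z ∧ orient y x z = -orient x y z ∧
      orient z y x = -orient x y z := by
    grind only [orient_rotate, orient_swap]
  simp only [IsConvexQuad, permute (v i) (v j) (v l), permute (v i) (v j) (v m),
    permute (v i) (v l) (v m), permute (v j) (v l) (v m), neg_pos, neg_lt_zero] at hi hj hl hm ⊢
  rcases hijl.lt_or_gt with hijl | hijl <;> rcases hijm.lt_or_gt with hijm | hijm <;>
    rcases hilm.lt_or_gt with hilm | hilm <;> rcases hjlm.lt_or_gt with hjlm | hjlm <;>
    grind only

end Orientation

section SignedAngle

/-- The signed angle from `u` to `v`, in `(-π, π]`. It is encoded as the argument of the complex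
number `v * conj u`. -/
def signedAngle (u v : Pt) : ℝ :=
  Complex.arg ⟨u.1 * v.1 + u.2 * v.2, cross2 u v⟩

lemma signedAngle_neg {u v : Pt} (h : cross2 u v < 0) : signedAngle u v < 0 :=
  Complex.arg_neg_iff.2 h

lemma signedAngle_pos {u v : Pt} (h : 0 < cross2 u v) : 0 < signedAngle u v :=
  (Complex.arg_nonneg_iff.2 h.le).lt_of_ne' fun h₀ => h.ne' (Complex.arg_eq_zero_iff.1 h₀).2

lemma arg_mul_conj_of_re_pos {x y : ℂ} (hx : 0 < x.re) (hy : 0 < y.re) :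
    Complex.arg (x * starRingEnd ℂ y) = x.arg - y.arg := by
  have hx_arg := abs_lt.1 (Complex.abs_arg_lt_pi_div_two_iff.2 (Or.inl hx))
  have hy_arg := abs_lt.1 (Complex.abs_arg_lt_pi_div_two_iff.2 (Or.inl hy))
  have hx₀ : x ≠ 0 := fun h => hx.ne' (by rw [h, Complex.zero_re])
  have hy₀ : y ≠ 0 := fun h => hy.ne' (by rw [h, Complex.zero_re])
  have hconj : (starRingEnd ℂ y).arg = -y.arg := by
    rw [Complex.arg_conj, if_neg (by linarith [Real.pi_pos])]
  have hsum : x.arg + (starRingEnd ℂ y).arg ∈ Set.Ioc (-Real.pi) Real.pi := by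
    rw [hconj]
    constructor <;> linarith
  rw [Complex.arg_mul hx₀ ((map_ne_zero _).2 hy₀) hsum, hconj, sub_eq_add_neg]

lemma exists_signedAngle_eq_sub (f : Pt →L[ℝ] ℝ) :
    ∃ g : Pt → ℝ, ∀ u v, 0 < f u → 0 < f v → signedAngle u v = g v - g u := by
  -- `g u` is the signed angle from the vector representing `f` to `u`.
  let z (u : Pt) : ℂ := ⟨f u, f (1, 0) * u.2 - f (0, 1) * u.1⟩
  refine ⟨fun u => (z u).arg, fun u v hu hv => ?_⟩
  have hf : 0 < f (1, 0) ^ 2 + f (0, 1) ^ 2 := by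
    rw [clm_apply_eq_coord] at hu
    by_contra! h
    have h₁ : f (1, 0) = 0 := by nlinarith [sq_nonneg (f (1, 0)), sq_nonneg (f (0, 1))]
    have h₂ : f (0, 1) = 0 := by nlinarith [sq_nonneg (f (1, 0)), sq_nonneg (f (0, 1))]
    simp [h₁, h₂] at hu
  rw [← arg_mul_conj_of_re_pos hv hu, signedAngle, ← Complex.arg_real_mul _ hf]
  congr 1
  apply Complex.ext <;>
    simp only [z, Complex.mul_re, Complex.mul_im, Complex.ofReal_re, Complex.ofReal_im,
      Complex.conj_re, Complex.conj_im, clm_apply_eq_coord f u, clm_apply_eq_coord f v, cross2] <;>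
    ring

lemma sum_range_signedAngle {f : Pt →L[ℝ] ℝ} {x : ℕ → Pt} {n : ℕ} (hx : ∀ t ≤ n, 0 < f (x t)) :
    ∑ t ∈ Finset.range n, signedAngle (x t) (x (t + 1)) = signedAngle (x 0) (x n) := by
  obtain ⟨g, hg⟩ := exists_signedAngle_eq_sub f
  calc ∑ t ∈ Finset.range n, signedAngle (x t) (x (t + 1))
      = ∑ t ∈ Finset.range n, (g (x (t + 1)) - g (x t)) :=
        Finset.sum_congr rfl fun t ht => hg _ _ (hx t (Finset.mem_range.1 ht).le)
          (hx (t + 1) (Finset.mem_range.1 ht))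
    _ = g (x n) - g (x 0) := Finset.sum_range_sub (fun t => g (x t)) n
    _ = signedAngle (x 0) (x n) := (hg _ _ (hx 0 n.zero_le) (hx n le_rfl)).symm

lemma signedAngle_sub_eq_of_disjoint_segment {p p' q q' : Pt}
    (h : Disjoint (Seg p p') (Seg q q')) :
    signedAngle (p - q') (p' - q') - signedAngle (p - q) (p' - q) =
      signedAngle (p' - q) (p' - q') - signedAngle (p - q) (p - q') := by
  rw [Seg, Seg, ← convexHull_pair, ← convexHull_pair] at h
  obtain ⟨f, hf⟩ :=
    exists_forall_lt_of_disjoint_convexHull (Set.toFinite _) (Set.toFinite _) h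
  obtain ⟨g, hg⟩ := exists_signedAngle_eq_sub f
  have hpos {a b : Pt} (ha : a ∈ ({p, p'} : Set Pt)) (hb : b ∈ ({q, q'} : Set Pt)) :
      0 < f (a - b) := by
    rw [map_sub, sub_pos]
    exact hf a ha b hb
  have hpq := hpos (.inl rfl) (.inl rfl)
  have hpq' := hpos (.inl rfl) (.inr rfl)
  have hp'q := hpos (.inr rfl) (.inl rfl)
  have hp'q' := hpos (.inr rfl) (.inr rfl)
  rw [hg _ _ hpq' hp'q', hg _ _ hpq hp'q, hg _ _ hp'q hp'q', hg _ _ hpq hpq']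
  ring

end SignedAngle

lemma sum_range_sub_eq_of_forall_cell {A : Type*} [AddCommGroup A] {H W : ℕ → ℕ → A} {m n : ℕ}
    (h : ∀ s < m, ∀ t < n, H s (t + 1) - H s t = W (s + 1) t - W s t) :
    ∑ s ∈ Finset.range m, H s n - ∑ s ∈ Finset.range m, H s 0 =
      ∑ t ∈ Finset.range n, W m t - ∑ t ∈ Finset.range n, W 0 t := by
  calc ∑ s ∈ Finset.range m, H s n - ∑ s ∈ Finset.range m, H s 0
      = ∑ s ∈ Finset.range m, ∑ t ∈ Finset.range n, (H s (t + 1) - H s t) := by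
        rw [← Finset.sum_sub_distrib]
        exact Finset.sum_congr rfl fun s _ => (Finset.sum_range_sub (H s) n).symm
    _ = ∑ s ∈ Finset.range m, ∑ t ∈ Finset.range n, (W (s + 1) t - W s t) :=
        Finset.sum_congr rfl fun s hs => Finset.sum_congr rfl fun t ht =>
          h s (Finset.mem_range.1 hs) t (Finset.mem_range.1 ht)
    _ = ∑ t ∈ Finset.range n, ∑ s ∈ Finset.range m, (W (s + 1) t - W s t) := Finset.sum_comm
    _ = ∑ t ∈ Finset.range n, W m t - ∑ t ∈ Finset.range n, W 0 t := by
        rw [← Finset.sum_sub_distrib]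
        exact Finset.sum_congr rfl fun t _ => Finset.sum_range_sub (fun s => W s t) m

section DisjointPaths

variable {p q : ℕ → Pt} {m n : ℕ}

lemma signedAngle_sub_eq_of_disjoint_paths
    (hpq : ∀ s < m, ∀ t < n, Disjoint (Seg (p s) (p (s + 1))) (Seg (q t) (q (t + 1))))
    (hp₀ : p 0 ∉ convexHull ℝ (q '' Set.Iic n)) (hpm : p m ∉ convexHull ℝ (q '' Set.Iic n))
    (hq₀ : q 0 ∉ convexHull ℝ (p '' Set.Iic m)) (hqn : q n ∉ convexHull ℝ (p '' Set.Iic m)) :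
    signedAngle (p 0 - q n) (p m - q n) - signedAngle (p 0 - q 0) (p m - q 0) =
      signedAngle (p m - q 0) (p m - q n) - signedAngle (p 0 - q 0) (p 0 - q n) := by
  have sum_from {x : ℕ → Pt} {a : Pt} {k : ℕ} (ha : a ∉ convexHull ℝ (x '' Set.Iic k)) :
      ∑ t ∈ Finset.range k, signedAngle (a - x t) (a - x (t + 1)) =
        signedAngle (a - x 0) (a - x k) := by
    obtain ⟨f, hf⟩ := exists_forall_lt_of_notMem_convexHull ((Set.finite_Iic k).image x) ha
    exact sum_range_signedAngle (f := f) (x := fun t => a - x t) fun t ht => by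
      simpa using hf _ (Set.mem_image_of_mem x ht)
  have sum_to {x : ℕ → Pt} {a : Pt} {k : ℕ} (ha : a ∉ convexHull ℝ (x '' Set.Iic k)) :
      ∑ t ∈ Finset.range k, signedAngle (x t - a) (x (t + 1) - a) =
        signedAngle (x 0 - a) (x k - a) := by
    obtain ⟨f, hf⟩ := exists_forall_lt_of_notMem_convexHull ((Set.finite_Iic k).image x) ha
    exact sum_range_signedAngle (f := -f) (x := fun t => x t - a) fun t ht => by
      simpa using hf _ (Set.mem_image_of_mem x ht)
  rw [← sum_to hq₀, ← sum_to hqn, ← sum_from hp₀, ← sum_from hpm]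
  exact sum_range_sub_eq_of_forall_cell
    (H := fun s t => signedAngle (p s - q t) (p (s + 1) - q t))
    (W := fun s t => signedAngle (p s - q t) (p s - q (t + 1)))
    fun s hs t ht => signedAngle_sub_eq_of_disjoint_segment (hpq s hs t ht)

lemma not_isConvexQuad_of_disjoint_paths
    (hpq : ∀ s < m, ∀ t < n, Disjoint (Seg (p s) (p (s + 1))) (Seg (q t) (q (t + 1))))
    (hp₀ : p 0 ∉ convexHull ℝ (q '' Set.Iic n)) (hpm : p m ∉ convexHull ℝ (q '' Set.Iic n))
    (hq₀ : q 0 ∉ convexHull ℝ (p '' Set.Iic m)) (hqn : q n ∉ convexHull ℝ (p '' Set.Iic m)) :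
    ¬ IsConvexQuad (p 0) (q 0) (p m) (q n) := by
  intro h
  have angle_eq := signedAngle_sub_eq_of_disjoint_paths hpq hp₀ hpm hq₀ hqn
  have cross₁ : cross2 (p 0 - q n) (p m - q n) = orient (p 0) (p m) (q n) := by
    simp only [orient, cross2, Prod.fst_sub, Prod.snd_sub]; ring
  have cross₂ : cross2 (p 0 - q 0) (p m - q 0) = -orient (p 0) (q 0) (p m) := by
    simp only [orient, cross2, Prod.fst_sub, Prod.snd_sub]; ring
  have cross₃ : cross2 (p m - q 0) (p m - q n) = -orient (q 0) (p m) (q n) := by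
    simp only [orient, cross2, Prod.fst_sub, Prod.snd_sub]; ring
  have cross₄ : cross2 (p 0 - q 0) (p 0 - q n) = orient (p 0) (q 0) (q n) := by
    simp only [orient, cross2, Prod.fst_sub, Prod.snd_sub]; ring
  rcases h with ⟨h₁, h₂, h₃, h₄⟩ | ⟨h₁, h₂, h₃, h₄⟩
  · have angle₁ := signedAngle_pos (cross₁ ▸ h₃)
    have angle₂ := signedAngle_neg (cross₂ ▸ neg_neg_of_pos h₁)
    have angle₃ := signedAngle_neg (cross₃ ▸ neg_neg_of_pos h₄)
    have angle₄ := signedAngle_pos (cross₄ ▸ h₂)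
    linarith
  · have angle₁ := signedAngle_neg (cross₁ ▸ h₃)
    have angle₂ := signedAngle_pos (cross₂ ▸ neg_pos_of_neg h₁)
    have angle₃ := signedAngle_pos (cross₃ ▸ neg_pos_of_neg h₄)
    have angle₄ := signedAngle_neg (cross₄ ▸ h₂)
    linarith

end DisjointPaths

lemma eq_of_forall_quadruple {ι α : Type*} [LinearOrder ι] {σ : ι → ι → ι → α}
    (h : ∀ i j l m, i < j → j < l → l < m →
      σ i j l = σ i j m ∧ σ i j m = σ i l m ∧ σ i l m = σ j l m)
    {i j l i' j' l' : ι} (hij : i < j) (hjl : j < l) (hij' : i' < j') (hjl' : j' < l') :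
    σ i j l = σ i' j' l' := by
  have replace_last {a b c c' : ι} (hab : a < b) (hbc : b < c) (hc : c ≤ c') :
      σ a b c = σ a b c' := by
    rcases hc.eq_or_lt with rfl | hc
    exacts [rfl, (h a b c c' hab hbc hc).1]
  have replace_first {a a' b c : ι} (ha : a' ≤ a) (hab : a < b) (hbc : b < c) :
      σ a b c = σ a' b c := by
    rcases ha.eq_or_lt with rfl | ha
    exacts [rfl, (h a' a b c ha hab hbc).2.2.symm]
  have replace_middle {a b b' c : ι} (hab : a < b) (hb : b ≤ b') (hbc : b' < c) :
      σ a b c = σ a b' c := by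
    rcases hb.eq_or_lt with rfl | hb
    exacts [rfl, (h a b b' c hab hb hbc).2.1]
  have hij_min : min i i' < j := min_lt_of_left_lt hij
  have hij_min' : min i i' < j' := min_lt_of_right_lt hij'
  have hjl_max : j < max l l' := lt_max_of_lt_left hjl
  have hjl_max' : j' < max l l' := lt_max_of_lt_right hjl'
  calc σ i j l = σ (min i i') j (max l l') := (replace_last hij hjl (le_max_left l l')).trans
        (replace_first (min_le_left i i') hij hjl_max)
    _ = σ (min i i') j' (max l l') := by
      rcases le_total j j' with hj | hj
      · exact replace_middle hij_min hj hjl_max'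
      · exact (replace_middle hij_min' hj hjl_max).symm
    _ = σ i' j' l' := ((replace_last hij' hjl' (le_max_right l l')).trans
        (replace_first (min_le_right i i') hij' hjl_max')).symm

lemma natCast_zmod_ne {k x y : ℕ} (hxy : x < y) (hyx : y < x + k) : (x : ZMod k) ≠ y := by
  rw [Ne, ZMod.natCast_eq_natCast_iff, Nat.modEq_iff_dvd' hxy.le]
  exact Nat.not_dvd_of_pos_of_lt (Nat.sub_pos_of_lt hxy) (by omega)

namespace SimplePolygon

variable (P : SimplePolygon)

instance : NeZero P.k := ⟨by have := P.three_le; omega⟩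

/-- The periodic sequence of the vertices of `P`. Indexing by `ℕ` instead of `ZMod P.k` allows an
arc of `P` to be written as an interval of indices, also when it passes through the vertex `0`. -/
def walk (n : ℕ) : Pt := P.vtx n

/-- The vertices of the convex hull of `P`. -/
def hullVertices : Set Pt := (convexHull ℝ (Set.range P.vtx)).extremePoints ℝ

/-- The positions in `0, …, k - 1` of the vertices of `P` that are vertices of its convex hull. -/
def hullIndices : Set ℕ := {n | n < P.k ∧ P.walk n ∈ P.hullVertices}

variable {P}

lemma walk_val (i : ZMod P.k) : P.walk i.val = P.vtx i := by
  rw [walk, ZMod.natCast_zmod_val]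

lemma walk_add_k (n : ℕ) : P.walk (n + P.k) = P.walk n := by
  rw [walk, Nat.cast_add, ZMod.natCast_self, add_zero, walk]

lemma walk_ne {x y : ℕ} (hxy : x < y) (hyx : y < x + P.k) : P.walk x ≠ P.walk y :=
  P.inj.ne (natCast_zmod_ne hxy hyx)

lemma disjoint_edges {x y : ℕ} (hxy : x + 1 < y) (hyx : y + 1 < x + P.k) :
    Disjoint (Seg (P.walk x) (P.walk (x + 1))) (Seg (P.walk y) (P.walk (y + 1))) := by
  rw [Set.disjoint_iff_inter_eq_empty, ← Set.not_nonempty_iff_eq_empty]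
  simp only [walk, Nat.cast_add_one]
  rw [P.edge_inter _ _ (natCast_zmod_ne (by omega) (by omega)), not_or]
  have hy_ne := natCast_zmod_ne (k := P.k) hxy (by omega)
  have hx_ne := natCast_zmod_ne (k := P.k) (x := x) (y := y + 1) (by omega) hyx
  push_cast at hy_ne hx_ne
  exact ⟨hy_ne.symm, hx_ne⟩

lemma walk_notMem_convexHull {n N : ℕ} {q : ℕ → ℕ} (hn : P.walk n ∈ P.hullVertices)
    (hq : ∀ t ≤ N, P.walk (q t) ≠ P.walk n) :
    P.walk n ∉ convexHull ℝ ((fun t => P.walk (q t)) '' Set.Iic N) :=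
  notMem_convexHull_of_mem_extremePoints hn (Set.image_subset_iff.2 fun _ _ => ⟨_, rfl⟩) <| by
    rintro ⟨t, ht, h⟩
    exact hq t ht h

lemma not_isConvexQuad_walk {i j l m : ℕ} (hij : i ≤ j) (hjl : j < l) (hlm : l ≤ m)
    (hmi : m < i + P.k) (hi : P.walk i ∈ P.hullVertices) (hj : P.walk j ∈ P.hullVertices)
    (hl : P.walk l ∈ P.hullVertices) (hm : P.walk m ∈ P.hullVertices) :
    ¬ IsConvexQuad (P.walk i) (P.walk l) (P.walk j) (P.walk m) := by
  obtain ⟨s, rfl⟩ := Nat.exists_eq_add_of_le hij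
  obtain ⟨t, rfl⟩ := Nat.exists_eq_add_of_le hlm
  exact not_isConvexQuad_of_disjoint_paths
    (p := fun a => P.walk (i + a)) (q := fun b => P.walk (l + b))
    (fun a ha b hb => disjoint_edges (by omega) (by omega))
    (walk_notMem_convexHull hi fun b hb => (walk_ne (by omega) (by omega)).symm)
    (walk_notMem_convexHull hj fun b hb => (walk_ne (by omega) (by omega)).symm)
    (walk_notMem_convexHull hl fun a ha => walk_ne (by omega) (by omega))
    (walk_notMem_convexHull hm fun a ha => walk_ne (by omega) (by omega))

lemma convexIndependent_hullIndices : ConvexIndependent ℝ fun n : P.hullIndices => P.walk n := by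
  refine (convex_convexHull ℝ (Set.range P.vtx)).convexIndependent_extremePoints.comp_embedding
    ⟨fun n : P.hullIndices => ⟨P.walk n, n.2.2⟩, fun x y hxy => ?_⟩
  have hxy : P.walk x = P.walk y := congrArg Subtype.val hxy
  have hx := x.2.1
  have hy := y.2.1
  by_contra! hne
  rcases hne.lt_or_gt with h | h
  · exact walk_ne h (by omega) hxy
  · exact walk_ne h (by omega) hxy.symm

lemma isConvexQuad_walk {i j l m : P.hullIndices} (hij : i < j) (hjl : j < l) (hlm : l < m) :
    IsConvexQuad (P.walk i) (P.walk j) (P.walk l) (P.walk m) := by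
  have hm := m.2.1
  rcases isConvexQuad_or_of_convexIndependent convexIndependent_hullIndices hij.ne
    (hij.trans hjl).ne (hij.trans (hjl.trans hlm)).ne hjl.ne (hjl.trans hlm).ne hlm.ne
    with h | h | h
  · exact h
  · exact absurd h <| not_isConvexQuad_walk hij.le hjl hlm.le (by omega) i.2.2 j.2.2 l.2.2 m.2.2
  · have hi : P.walk (i + P.k) = P.walk i := walk_add_k i
    have hij : (i : ℕ) < j := hij
    refine absurd h.rotate ?_
    rw [← hi]
    exact not_isConvexQuad_walk hjl.le hlm (by omega) (by omega) j.2.2 l.2.2 m.2.2 (hi ▸ i.2.2)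

lemma sign_orient_walk_eq {i j l i' j' l' : P.hullIndices} (hij : i < j) (hjl : j < l)
    (hij' : i' < j') (hjl' : j' < l') :
    SignType.sign (orient (P.walk i) (P.walk j) (P.walk l)) =
      SignType.sign (orient (P.walk i') (P.walk j') (P.walk l')) :=
  eq_of_forall_quadruple (σ := fun i j l : P.hullIndices =>
      SignType.sign (orient (P.walk i) (P.walk j) (P.walk l)))
    (fun _ _ _ _ hij hjl hlm => (isConvexQuad_walk hij hjl hlm).sign_orient_eq) hij hjl hij' hjl'

lemma orient_hullIndices_pos_or_neg :
    (∀ i j l : P.hullIndices, i < j → j < l → 0 < orient (P.walk i) (P.walk j) (P.walk l)) ∨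
      ∀ i j l : P.hullIndices, i < j → j < l → orient (P.walk i) (P.walk j) (P.walk l) < 0 := by
  by_cases hex : ∃ i j l : P.hullIndices, i < j ∧ j < l ∧
      0 < orient (P.walk i) (P.walk j) (P.walk l)
  · obtain ⟨i', j', l', hij', hjl', hpos⟩ := hex
    exact .inl fun i j l hij hjl => sign_eq_one_iff.1 <|
      (sign_orient_walk_eq hij hjl hij' hjl').trans (sign_pos hpos)
  · push Not at hex
    exact .inr fun i j l hij hjl => (hex i j l hij hjl).lt_of_ne <|
      orient_ne_zero_of_convexIndependent convexIndependent_hullIndices hij.ne (hij.trans hjl).ne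
        hjl.ne

lemma val_mem_hullIndices {i : ZMod P.k} (hi : P.vtx i ∈ P.hullVertices) :
    i.val ∈ P.hullIndices :=
  ⟨ZMod.val_lt i, (walk_val i).symm ▸ hi⟩

end SimplePolygon

theorem hull_vertices_in_polygon_order_general (P : SimplePolygon) :
    (∀ i j l : ZMod P.k, i.val < j.val → j.val < l.val →
      P.vtx i ∈ Set.extremePoints ℝ (convexHull ℝ (Set.range P.vtx)) →
      P.vtx j ∈ Set.extremePoints ℝ (convexHull ℝ (Set.range P.vtx)) →
      P.vtx l ∈ Set.extremePoints ℝ (convexHull ℝ (Set.range P.vtx)) →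
      0 < cross2 (P.vtx j - P.vtx i) (P.vtx l - P.vtx i)) ∨
    (∀ i j l : ZMod P.k, i.val < j.val → j.val < l.val →
      P.vtx i ∈ Set.extremePoints ℝ (convexHull ℝ (Set.range P.vtx)) →
      P.vtx j ∈ Set.extremePoints ℝ (convexHull ℝ (Set.range P.vtx)) →
      P.vtx l ∈ Set.extremePoints ℝ (convexHull ℝ (Set.range P.vtx)) →
      cross2 (P.vtx j - P.vtx i) (P.vtx l - P.vtx i) < 0) := by
  refine P.orient_hullIndices_pos_or_neg.imp ?_ ?_ <;> intro h i j l hij hjl hi hj hl <;>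
    simpa only [orient, SimplePolygon.walk_val] using
      h ⟨i.val, SimplePolygon.val_mem_hullIndices hi⟩ ⟨j.val, SimplePolygon.val_mem_hullIndices hj⟩
        ⟨l.val, SimplePolygon.val_mem_hullIndices hl⟩ hij hjl

/-- The vertices of a simple polygon `P` (no three of whose vertices are
collinear) that are extreme points of the convex hull of the vertex set occur along `P`
in convex-position cyclic order: in one of the two orientations of `P`, every triple of
extreme vertices taken in the cyclic order of `P` is counterclockwise (positively
oriented). -/
theorem hull_vertices_in_polygon_order (P : SimplePolygon)
    (hgp : ∀ p ∈ Set.range P.vtx, ∀ q ∈ Set.range P.vtx, ∀ r ∈ Set.range P.vtx,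
      p ≠ q → p ≠ r → q ≠ r → ¬ Collinear ℝ ({p, q, r} : Set Pt)) :
    (∀ i j l : ZMod P.k, i.val < j.val → j.val < l.val →
      P.vtx i ∈ Set.extremePoints ℝ (convexHull ℝ (Set.range P.vtx)) →
      P.vtx j ∈ Set.extremePoints ℝ (convexHull ℝ (Set.range P.vtx)) →
      P.vtx l ∈ Set.extremePoints ℝ (convexHull ℝ (Set.range P.vtx)) →
      0 < cross2 (P.vtx j - P.vtx i) (P.vtx l - P.vtx i)) ∨
    (∀ i j l : ZMod P.k, i.val < j.val → j.val < l.val →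
      P.vtx i ∈ Set.extremePoints ℝ (convexHull ℝ (Set.range P.vtx)) →
      P.vtx j ∈ Set.extremePoints ℝ (convexHull ℝ (Set.range P.vtx)) →
      P.vtx l ∈ Set.extremePoints ℝ (convexHull ℝ (Set.range P.vtx)) →
      cross2 (P.vtx j - P.vtx i) (P.vtx l - P.vtx i) < 0) :=
  hull_vertices_in_polygon_order_general P
end
end
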